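/- arXiv:math/9808110 — 2 statements merged into one kernel-verified Lean document; each statement's English description precedes it below -/
import Mathlib

section
/- The linear functional I : A → ℂ defined on the basis monomials η₊^n η₋^m δ^k (0 ≤ n,m,k ≤ p−1) by I(η₊^{p−1}η₋^{p−1}δ⁰) = q^{−1} and I = 0 on all other basis monomials is an invariant integral on E(1,1|p): for every a ∈ A one has (id⊗I)(Δ(a)) = I(a)·1_A and (I⊗id)(Δ(a)) = I(a)·1_A. Moreover it is unique up to scalar: every linear functional J : A → ℂ satisfying (id⊗J)(Δ(a)) = J(a)·1_A and (J⊗id)(Δ(a)) = J(a)·1_A for all a ∈ A is a complex scalar multiple of I. -/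
open scoped TensorProduct

noncomputable section

/-- `q = exp(2πi/p)`, a primitive `p`-th root of unity. -/
def q (p : ℕ) : ℂ := Complex.exp (2 * Real.pi * Complex.I / p)

/-- `q^{1/2} = exp(iπ/p)`. -/
def qh (p : ℕ) : ℂ := Complex.exp (Real.pi * Complex.I / p)

/-- The balanced q-number `[k] = (q^k - q^{-k})/(q - q^{-1})`. -/
def qnum (p k : ℕ) : ℂ := (q p ^ k - (q p)⁻¹ ^ k) / (q p - (q p)⁻¹)

/-- The balanced q-factorial `[k]! = [1][2]⋯[k]`, with `[0]! = 1`. -/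
def qfact (p k : ℕ) : ℂ := ∏ j ∈ Finset.range k, qnum p (j + 1)

/-- Generators `η₊, η₋, δ` of the coordinate algebra of `E(1,1|p)`. -/
inductive Gen : Type
  | ep : Gen
  | em : Gen
  | d : Gen

open FreeAlgebra in
/-- The defining relations of `A(E(1,1|p))`: the two-sided ideal generated by
`η₋η₊ − q²η₊η₋`, `η₊δ − q²δη₊`, `η₋δ − q²δη₋`, `δ^p − 1`, `η₊^p`, `η₋^p`. -/
inductive ERel (p : ℕ) : FreeAlgebra ℂ Gen → FreeAlgebra ℂ Gen → Prop
  | commEta : ERel p (ι ℂ Gen.em * ι ℂ Gen.ep) ((q p ^ 2) • (ι ℂ Gen.ep * ι ℂ Gen.em))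
  | commEpD : ERel p (ι ℂ Gen.ep * ι ℂ Gen.d) ((q p ^ 2) • (ι ℂ Gen.d * ι ℂ Gen.ep))
  | commEmD : ERel p (ι ℂ Gen.em * ι ℂ Gen.d) ((q p ^ 2) • (ι ℂ Gen.d * ι ℂ Gen.em))
  | deltaPow : ERel p (ι ℂ Gen.d ^ p) 1
  | epPow : ERel p (ι ℂ Gen.ep ^ p) 0
  | emPow : ERel p (ι ℂ Gen.em ^ p) 0

/-- The coordinate algebra `A = A(E(1,1|p))` of the reduced quantum Poincaré group. -/
abbrev A (p : ℕ) : Type := RingQuot (ERel p)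

/-- `η₊ ∈ A`. -/
def ηp (p : ℕ) : A p := RingQuot.mkAlgHom ℂ (ERel p) (FreeAlgebra.ι ℂ Gen.ep)

/-- `η₋ ∈ A`. -/
def ηm (p : ℕ) : A p := RingQuot.mkAlgHom ℂ (ERel p) (FreeAlgebra.ι ℂ Gen.em)

/-- `δ ∈ A`. -/
def dl (p : ℕ) : A p := RingQuot.mkAlgHom ℂ (ERel p) (FreeAlgebra.ι ℂ Gen.d)

/-!
The `q`-binomial theorem writes `Δ(η₊ⁿη₋ᵐδᵏ)` as a sum over the factorizations of `η₊ⁿη₋ᵐ`. On a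
monomial with `n, m < p` the functional `I` sees at most the term in which one leg carries the whole
of `η₊ⁿη₋ᵐ`, whence invariance. Conversely, pairing with the complementary monomial makes `I` supply
a dual functional to each monomial, so coefficients may be compared. For an invariant `J`, comparing
those of `η₊` in the identity for `η₊ⁿ⁺¹η₋ᵐδᵏ` shows that a nonzero geometric sum in `q^{±2}` times
`J(η₊ⁿη₋ᵐδˡ)` vanishes if `n + 1 < p`, and likewise for `η₋`; comparing powers of `δ` for
`η₊^{p-1}η₋^{p-1}δᵏ` leaves only `k = 0`.
-/

open Finset.HasAntidiagonal (antidiagonal mem_antidiagonal)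

section QBinomial

variable {K : Type*} [CommSemiring K]

/-- The Gaussian binomial coefficient `n` choose `k` with parameter `c`, by the recursion of
`Nat.choose`. -/
def gaussBinom (c : K) : ℕ → ℕ → K
  | _, 0 => 1
  | 0, _ + 1 => 0
  | n + 1, k + 1 => gaussBinom c n k + c ^ (k + 1) * gaussBinom c n (k + 1)

@[simp]
theorem gaussBinom_zero_right (c : K) (n : ℕ) : gaussBinom c n 0 = 1 := by
  cases n <;> rfl

theorem gaussBinom_succ_succ (c : K) (n k : ℕ) :
    gaussBinom c (n + 1) (k + 1) = gaussBinom c n k + c ^ (k + 1) * gaussBinom c n (k + 1) :=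
  rfl

theorem gaussBinom_eq_zero_of_lt (c : K) {n k : ℕ} (h : n < k) : gaussBinom c n k = 0 := by
  induction n generalizing k with
  | zero => obtain ⟨k, rfl⟩ := Nat.exists_eq_succ_of_ne_zero h.ne'; rfl
  | succ n ih =>
    obtain ⟨k, rfl⟩ := Nat.exists_eq_succ_of_ne_zero (Nat.ne_zero_of_lt h)
    rw [gaussBinom_succ_succ, ih (by omega), ih (by omega), mul_zero, add_zero]

@[simp]
theorem gaussBinom_self (c : K) (n : ℕ) : gaussBinom c n n = 1 := by
  induction n with
  | zero => rfl
  | succ n ih =>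
    rw [gaussBinom_succ_succ, ih, gaussBinom_eq_zero_of_lt c n.lt_succ_self, mul_zero, add_zero]

theorem gaussBinom_one_right (c : K) (n : ℕ) :
    gaussBinom c n 1 = ∑ t ∈ Finset.range n, c ^ t := by
  induction n with
  | zero => rfl
  | succ n ih =>
    rw [gaussBinom_succ_succ, gaussBinom_zero_right, ih, geom_sum_succ, add_comm, pow_one]

theorem gaussBinom_succ_self (c : K) (n : ℕ) :
    gaussBinom c (n + 1) n = ∑ t ∈ Finset.range (n + 1), c ^ t := by
  induction n with
  | zero => simp
  | succ n ih => rw [gaussBinom_succ_succ, ih, gaussBinom_self, mul_one, ← Finset.sum_range_succ]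

variable {R : Type*} [Semiring R] [Algebra K R]

theorem pow_mul_of_qcomm {c : K} {a b : R} (h : b * a = c • (a * b)) (j : ℕ) :
    b ^ j * a = c ^ j • (a * b ^ j) := by
  induction j with
  | zero => simp
  | succ j ih =>
    rw [pow_succ, mul_assoc, h, mul_smul_comm, ← mul_assoc, ih, smul_mul_assoc, smul_smul,
      mul_assoc, pow_succ' c]

theorem pow_mul_pow_of_qcomm {c : K} {a b : R} (h : b * a = c • (a * b)) (i j : ℕ) :
    b ^ j * a ^ i = c ^ (i * j) • (a ^ i * b ^ j) := by
  induction i with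
  | zero => simp
  | succ i ih =>
    rw [pow_succ, ← mul_assoc, ih, smul_mul_assoc, mul_assoc, pow_mul_of_qcomm h, mul_smul_comm,
      smul_smul, mul_assoc, add_mul, one_mul, pow_add]

theorem mul_pow_of_qcomm {c : K} {a b : R} (h : b * a = c • (a * b)) (i : ℕ) :
    b * a ^ i = c ^ i • (a ^ i * b) := by
  simpa only [pow_one, mul_one] using pow_mul_pow_of_qcomm h i 1

theorem add_pow_of_qcomm {c : K} {a b : R} (h : b * a = c • (a * b)) (n : ℕ) :
    (a + b) ^ n =
      ∑ ij ∈ antidiagonal n, gaussBinom c n ij.1 • (a ^ ij.1 * b ^ ij.2) := by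
  induction n with
  | zero => simp
  | succ n ih =>
    have mul_b (i j : ℕ) : b * (a ^ i * b ^ j) = c ^ i • (a ^ i * b ^ (j + 1)) := by
      rw [← mul_assoc, mul_pow_of_qcomm h, smul_mul_assoc, mul_assoc, ← pow_succ']
    have sum_mul_b :
        ∑ ij ∈ antidiagonal n,
            (gaussBinom c n ij.1 * c ^ ij.1) • (a ^ ij.1 * b ^ (ij.2 + 1)) =
          b ^ (n + 1) + ∑ ij ∈ antidiagonal n,
            (c ^ (ij.1 + 1) * gaussBinom c n (ij.1 + 1)) • (a ^ (ij.1 + 1) * b ^ ij.2) := by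
      have := Finset.Nat.sum_antidiagonal_succ.symm.trans (Finset.Nat.sum_antidiagonal_succ'
        (n := n) (f := fun ij => (c ^ ij.1 * gaussBinom c n ij.1) • (a ^ ij.1 * b ^ ij.2)))
      simpa [gaussBinom_eq_zero_of_lt c n.lt_succ_self, mul_comm] using this.symm
    calc (a + b) ^ (n + 1)
        = ∑ ij ∈ antidiagonal n, gaussBinom c n ij.1 • (a ^ (ij.1 + 1) * b ^ ij.2) +
            ∑ ij ∈ antidiagonal n,
              (gaussBinom c n ij.1 * c ^ ij.1) • (a ^ ij.1 * b ^ (ij.2 + 1)) := by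
          simp only [pow_succ' (a + b), ih, add_mul, Finset.mul_sum, mul_smul_comm, mul_b,
            smul_add, Finset.sum_add_distrib, smul_smul, ← mul_assoc a, ← pow_succ']
      _ = _ := by
          simp only [sum_mul_b, Finset.Nat.sum_antidiagonal_succ, gaussBinom_succ_succ, add_smul,
            Finset.sum_add_distrib, gaussBinom_zero_right, one_smul, pow_zero, one_mul]
          abel

end QBinomial

theorem geom_sum_ne_zero_of_isPrimitiveRoot {K : Type*} [CommRing K] {c : K} {p n : ℕ}
    (hc : IsPrimitiveRoot c p) (hn : n ≠ 0) (hnp : n < p) : ∑ t ∈ Finset.range n, c ^ t ≠ 0 := by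
  intro hsum
  have hpow := geom_sum_mul c n
  rw [hsum, zero_mul, eq_comm, sub_eq_zero] at hpow
  exact hc.pow_ne_one_of_pos_of_lt hn hnp hpow

theorem add_pred_mul_modEq_zero {p : ℕ} (hp : 0 < p) (k : ℕ) : k + (p - 1) * k ≡ 0 [MOD p] := by
  rw [← one_add_mul, Nat.add_sub_of_le (show 1 ≤ p from hp), Nat.modEq_zero_iff_dvd]
  exact dvd_mul_right p k

theorem span_eq_top_of_mul_mem {K R : Type*} [CommSemiring K] [Semiring R] [Algebra K R]
    {S T : Set R} (hS : Algebra.adjoin K S = ⊤) (one_mem : 1 ∈ T)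
    (mul_mem : ∀ t ∈ T, ∀ a ∈ S, t * a ∈ Submodule.span K T) : Submodule.span K T = ⊤ := by
  have span_mul_mem {u a : R} (ha : a ∈ S) (hu : u ∈ Submodule.span K T) :
      u * a ∈ Submodule.span K T :=
    (Submodule.span_le (p := (Submodule.span K T).comap (LinearMap.mulRight K a))).mpr
      (fun t ht => mul_mem t ht a ha) hu
  rw [eq_top_iff, ← Algebra.top_toSubmodule, ← hS, Algebra.adjoin_eq_span, Submodule.span_le]
  intro u hu
  induction hu using Submonoid.closure_induction_right with
  | one => exact Submodule.subset_span one_mem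
  | mul_right u _ a ha ih => exact span_mul_mem ha ih

section Invariance

variable {K R : Type*} [CommSemiring K] [Semiring R] [Algebra K R]

/-- Right invariance of a functional `J` under a coproduct `Δ`, that is `(id ⊗ J) ∘ Δ = J · 1`. -/
def IsRightInvariant (Δ : R →ₐ[K] R ⊗[K] R) (J : R →ₗ[K] K) : Prop :=
  ∀ a, TensorProduct.rid K R (TensorProduct.map LinearMap.id J (Δ a)) = J a • 1

/-- Left invariance of a functional `J` under a coproduct `Δ`, that is `(J ⊗ id) ∘ Δ = J · 1`. -/
def IsLeftInvariant (Δ : R →ₐ[K] R ⊗[K] R) (J : R →ₗ[K] K) : Prop :=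
  ∀ a, TensorProduct.lid K R (TensorProduct.map J LinearMap.id (Δ a)) = J a • 1

end Invariance

/-- Elements `x, y, d` satisfying the relations of `η₊, η₋, δ` in the coordinate algebra of the
reduced quantum Poincaré group, with a primitive `p`-th root of unity `s` in place of `q²`. -/
structure IsPoincareTriple {K R : Type*} [CommSemiring K] [Semiring R] [Algebra K R]
    (p : ℕ) (s : K) (x y d : R) : Prop where
  pos : 0 < p
  prim : IsPrimitiveRoot s p
  y_mul_x : y * x = s • (x * y)
  x_mul_d : x * d = s • (d * x)
  y_mul_d : y * d = s • (d * y)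
  d_pow : d ^ p = 1
  x_pow : x ^ p = 0
  y_pow : y ^ p = 0

/-- `Δ` takes on `x, y, d` the values of the coproduct of the quantum Poincaré group on
`η₊, η₋, δ`; the inverse of `d` is written `d ^ (p - 1)`. -/
structure IsPoincareComul {K R : Type*} [CommSemiring K] [Semiring R] [Algebra K R]
    (p : ℕ) (x y d : R) (Δ : R →ₐ[K] R ⊗[K] R) : Prop where
  map_x : Δ x = x ⊗ₜ[K] 1 + d ⊗ₜ[K] x
  map_y : Δ y = y ⊗ₜ[K] 1 + (d ^ (p - 1)) ⊗ₜ[K] y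
  map_d : Δ d = d ⊗ₜ[K] d

/-- `I` reads off `c` times the coefficient of the top monomial `x ^ (p - 1) * y ^ (p - 1)`. -/
def IsTopCoefficient {K R : Type*} [CommSemiring K] [Semiring R] [Algebra K R]
    (p : ℕ) (x y d : R) (c : K) (I : R →ₗ[K] K) : Prop :=
  ∀ n m k : ℕ, n < p → m < p → k < p →
    I (x ^ n * y ^ m * d ^ k) = if n = p - 1 ∧ m = p - 1 ∧ k = 0 then c else 0

/-- The coefficient of `x ^ a.1 * y ^ b.1 * d ^ (a.2 - b.2) ⊗ x ^ a.2 * y ^ b.2` in the coproduct of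
`x ^ n * y ^ m`, for `a` and `b` on the antidiagonals of `n` and `m`. -/
def comulCoeff {K : Type*} [Field K] (s : K) (n m : ℕ) (a b : ℕ × ℕ) : K :=
  gaussBinom s⁻¹ n a.1 * gaussBinom s m b.1 * s⁻¹ ^ (b.1 * a.2)

namespace IsPoincareTriple

variable {K R : Type*} [Field K] [Semiring R] [Algebra K R] {p : ℕ} {s : K} {x y d : R}

theorem param_ne_zero (h : IsPoincareTriple p s x y d) : s ≠ 0 := h.prim.ne_zero h.pos.ne'

theorem d_mul_x (h : IsPoincareTriple p s x y d) : d * x = s⁻¹ • (x * d) := by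
  rw [h.x_mul_d, inv_smul_smul₀ h.param_ne_zero]

theorem d_mul_y (h : IsPoincareTriple p s x y d) : d * y = s⁻¹ • (y * d) := by
  rw [h.y_mul_d, inv_smul_smul₀ h.param_ne_zero]

theorem d_pow_pred_mul_y (h : IsPoincareTriple p s x y d) :
    d ^ (p - 1) * y = s • (y * d ^ (p - 1)) := by
  have inv_pow_pred : s⁻¹ ^ (p - 1) = s := by
    rw [inv_pow]
    exact inv_eq_of_mul_eq_one_right ((pow_sub_one_mul h.pos.ne' s).trans h.prim.pow_eq_one)
  rw [pow_mul_of_qcomm h.d_mul_y, inv_pow_pred]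

theorem d_pow_congr (h : IsPoincareTriple p s x y d) {k l : ℕ} (hkl : k ≡ l [MOD p]) :
    d ^ k = d ^ l :=
  pow_eq_pow_of_modEq hkl h.d_pow

theorem x_pow_of_le (h : IsPoincareTriple p s x y d) {n : ℕ} (hn : p ≤ n) : x ^ n = 0 :=
  pow_eq_zero_of_le hn h.x_pow

theorem y_pow_of_le (h : IsPoincareTriple p s x y d) {n : ℕ} (hn : p ≤ n) : y ^ n = 0 :=
  pow_eq_zero_of_le hn h.y_pow

theorem monomial_mul_x (h : IsPoincareTriple p s x y d) (n m k : ℕ) :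
    x ^ n * y ^ m * d ^ k * x = (s⁻¹ ^ k * s ^ m) • (x ^ (n + 1) * y ^ m * d ^ k) := by
  rw [mul_assoc, pow_mul_of_qcomm h.d_mul_x, mul_smul_comm, mul_assoc, ← mul_assoc (y ^ m),
    pow_mul_of_qcomm h.y_mul_x, smul_mul_assoc, mul_smul_comm, smul_smul, pow_succ]
  simp only [mul_assoc]

theorem monomial_mul_y_pow (h : IsPoincareTriple p s x y d) (n m k j : ℕ) :
    x ^ n * y ^ m * d ^ k * y ^ j = s⁻¹ ^ (j * k) • (x ^ n * y ^ (m + j) * d ^ k) := by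
  rw [mul_assoc, pow_mul_pow_of_qcomm h.d_mul_y, mul_smul_comm, pow_add]
  simp only [mul_assoc]

theorem span_monomials (h : IsPoincareTriple p s x y d)
    (hgen : Algebra.adjoin K {x, y, d} = ⊤) :
    Submodule.span K (Set.range fun t : ℕ × ℕ × ℕ => x ^ t.1 * y ^ t.2.1 * d ^ t.2.2) = ⊤ := by
  refine span_eq_top_of_mul_mem hgen ⟨(0, 0, 0), by simp⟩ ?_
  have monomial_mem (n m k : ℕ) : x ^ n * y ^ m * d ^ k ∈
      Submodule.span K (Set.range fun t : ℕ × ℕ × ℕ => x ^ t.1 * y ^ t.2.1 * d ^ t.2.2) :=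
    Submodule.subset_span ⟨(n, m, k), rfl⟩
  rintro _ ⟨⟨n, m, k⟩, rfl⟩ _ (rfl | rfl | rfl)
  · rw [h.monomial_mul_x]
    exact Submodule.smul_mem _ _ (monomial_mem _ _ _)
  · have mul_y := h.monomial_mul_y_pow n m k 1
    rw [pow_one] at mul_y
    rw [mul_y]
    exact Submodule.smul_mem _ _ (monomial_mem _ _ _)
  · rw [mul_assoc, ← pow_succ]
    exact monomial_mem _ _ _

theorem linearMap_ext (h : IsPoincareTriple p s x y d) (hgen : Algebra.adjoin K {x, y, d} = ⊤)
    {M : Type*} [AddCommMonoid M] [Module K M] {f g : R →ₗ[K] M}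
    (hfg : ∀ n m k : ℕ, n < p → m < p →
      f (x ^ n * y ^ m * d ^ k) = g (x ^ n * y ^ m * d ^ k)) : f = g := by
  refine LinearMap.ext_on (h.span_monomials hgen) ?_
  rintro _ ⟨⟨n, m, k⟩, rfl⟩
  rcases le_or_gt p n with hn | hn
  · simp [h.x_pow_of_le hn]
  rcases le_or_gt p m with hm | hm
  · simp [h.y_pow_of_le hm]
  exact hfg n m k hn hm

section Comul

variable {Δ : R →ₐ[K] R ⊗[K] R}

theorem comul_x_pow (h : IsPoincareTriple p s x y d) (hΔ : IsPoincareComul p x y d Δ) (n : ℕ) :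
    Δ (x ^ n) = ∑ a ∈ antidiagonal n,
      gaussBinom s⁻¹ n a.1 • ((x ^ a.1 * d ^ a.2) ⊗ₜ[K] (x ^ a.2)) := by
  have qcomm : (d ⊗ₜ[K] x) * (x ⊗ₜ[K] (1 : R)) = s⁻¹ • ((x ⊗ₜ[K] (1 : R)) * (d ⊗ₜ[K] x)) := by
    simp [h.d_mul_x, TensorProduct.smul_tmul']
  simp [hΔ.map_x, add_pow_of_qcomm qcomm]

theorem comul_y_pow (h : IsPoincareTriple p s x y d) (hΔ : IsPoincareComul p x y d Δ) (m : ℕ) :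
    Δ (y ^ m) = ∑ b ∈ antidiagonal m,
      gaussBinom s m b.1 • ((y ^ b.1 * d ^ ((p - 1) * b.2)) ⊗ₜ[K] (y ^ b.2)) := by
  have qcomm : ((d ^ (p - 1)) ⊗ₜ[K] y) * (y ⊗ₜ[K] (1 : R)) =
      s • ((y ⊗ₜ[K] (1 : R)) * ((d ^ (p - 1)) ⊗ₜ[K] y)) := by
    simp [h.d_pow_pred_mul_y, TensorProduct.smul_tmul']
  simp [hΔ.map_y, add_pow_of_qcomm qcomm, pow_mul]

theorem comul_monomial (h : IsPoincareTriple p s x y d) (hΔ : IsPoincareComul p x y d Δ)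
    (n m k : ℕ) :
    Δ (x ^ n * y ^ m * d ^ k) =
      ∑ a ∈ antidiagonal n, ∑ b ∈ antidiagonal m, comulCoeff s n m a b •
        ((x ^ a.1 * y ^ b.1 * d ^ (a.2 + (p - 1) * b.2 + k)) ⊗ₜ[K]
          (x ^ a.2 * y ^ b.2 * d ^ k)) := by
  have reorder (i u j v : ℕ) : x ^ i * d ^ u * (y ^ j * d ^ v) * d ^ k =
      s⁻¹ ^ (j * u) • (x ^ i * y ^ j * d ^ (u + v + k)) := by
    rw [mul_assoc (x ^ i), ← mul_assoc (d ^ u), pow_mul_pow_of_qcomm h.d_mul_y]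
    simp only [smul_mul_assoc, mul_smul_comm, pow_add, mul_assoc]
  rw [map_mul, map_mul, h.comul_x_pow hΔ, h.comul_y_pow hΔ, map_pow, hΔ.map_d,
    Finset.sum_mul_sum, Finset.sum_mul]
  refine Finset.sum_congr rfl fun a _ => ?_
  rw [Finset.sum_mul]
  refine Finset.sum_congr rfl fun b _ => ?_
  simp only [Algebra.TensorProduct.tmul_pow, Algebra.TensorProduct.tmul_mul_tmul, smul_mul_assoc,
    mul_smul_comm, smul_smul, reorder, ← TensorProduct.smul_tmul']
  rw [comulCoeff, mul_comm (gaussBinom s m b.1)]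

theorem rid_map_comul_monomial (h : IsPoincareTriple p s x y d) (hΔ : IsPoincareComul p x y d Δ)
    (J : R →ₗ[K] K) (n m k : ℕ) :
    TensorProduct.rid K R (TensorProduct.map LinearMap.id J (Δ (x ^ n * y ^ m * d ^ k))) =
      ∑ a ∈ antidiagonal n, ∑ b ∈ antidiagonal m,
        (comulCoeff s n m a b * J (x ^ a.2 * y ^ b.2 * d ^ k)) •
          (x ^ a.1 * y ^ b.1 * d ^ (a.2 + (p - 1) * b.2 + k)) := by
  simp only [h.comul_monomial hΔ, map_sum, map_smul, TensorProduct.map_tmul,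
    TensorProduct.rid_tmul, smul_smul, LinearMap.id_apply]

theorem lid_map_comul_monomial (h : IsPoincareTriple p s x y d) (hΔ : IsPoincareComul p x y d Δ)
    (J : R →ₗ[K] K) (n m k : ℕ) :
    TensorProduct.lid K R (TensorProduct.map J LinearMap.id (Δ (x ^ n * y ^ m * d ^ k))) =
      ∑ a ∈ antidiagonal n, ∑ b ∈ antidiagonal m,
        (comulCoeff s n m a b * J (x ^ a.1 * y ^ b.1 * d ^ (a.2 + (p - 1) * b.2 + k))) •
          (x ^ a.2 * y ^ b.2 * d ^ k) := by
  simp only [h.comul_monomial hΔ, map_sum, map_smul, TensorProduct.map_tmul,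
    TensorProduct.lid_tmul, smul_smul, LinearMap.id_apply]

end Comul

section Invariance

variable {c : K} {I : R →ₗ[K] K}

theorem topCoefficient_monomial (h : IsPoincareTriple p s x y d)
    (hI : IsTopCoefficient p x y d c I) (n m k : ℕ) :
    I (x ^ n * y ^ m * d ^ k) =
      if n = p - 1 ∧ m = p - 1 ∧ k ≡ 0 [MOD p] then c else 0 := by
  have hp := h.pos
  rcases le_or_gt p n with hn | hn
  · rw [h.x_pow_of_le hn, zero_mul, zero_mul, map_zero, if_neg (by omega)]
  rcases le_or_gt p m with hm | hm
  · rw [h.y_pow_of_le hm, mul_zero, zero_mul, map_zero, if_neg (by omega)]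
  rw [h.d_pow_congr (Nat.mod_modEq k p).symm, hI n m _ hn hm (Nat.mod_lt k hp)]
  congr 1

theorem exists_monomial_dual (h : IsPoincareTriple p s x y d) (hI : IsTopCoefficient p x y d c I)
    (hc : c ≠ 0) {i j : ℕ} (hi : i < p) (hj : j < p) (k : ℕ) :
    ∃ φ : R →ₗ[K] K, ∀ i' j' k' : ℕ, φ (x ^ i' * y ^ j' * d ^ k') =
      if i' = i ∧ j' = j ∧ k' ≡ k [MOD p] then 1 else 0 := by
  -- Multiplying by the complementary monomial moves `x ^ i * y ^ j * d ^ k` to the top one.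
  refine ⟨c⁻¹ • I ∘ₗ LinearMap.mulLeft K (x ^ (p - 1 - i)) ∘ₗ
    LinearMap.mulRight K (d ^ ((p - 1) * k) * y ^ (p - 1 - j)), fun i' j' k' => ?_⟩
  have complement : x ^ (p - 1 - i) *
      (x ^ i' * y ^ j' * d ^ k' * (d ^ ((p - 1) * k) * y ^ (p - 1 - j))) =
      s⁻¹ ^ ((p - 1 - j) * (k' + (p - 1) * k)) •
        (x ^ (p - 1 - i + i') * y ^ (j' + (p - 1 - j)) * d ^ (k' + (p - 1) * k)) := by
    rw [← h.monomial_mul_y_pow]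
    simp only [pow_add, mul_assoc]
  have modEq_iff : k' + (p - 1) * k ≡ 0 [MOD p] ↔ k' ≡ k [MOD p] := by
    have add_pred_mul := add_pred_mul_modEq_zero h.pos k
    exact ⟨fun hk => Nat.ModEq.add_right_cancel' _ (hk.trans add_pred_mul.symm),
      fun hk => (hk.add_right _).trans add_pred_mul⟩
  have index_iff : (p - 1 - i + i' = p - 1 ∧ j' + (p - 1 - j) = p - 1 ∧
      k' + (p - 1) * k ≡ 0 [MOD p]) ↔ i' = i ∧ j' = j ∧ k' ≡ k [MOD p] := by
    rw [modEq_iff, ← and_assoc, ← and_assoc]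
    exact and_congr_left fun _ => by omega
  simp only [LinearMap.smul_apply, LinearMap.comp_apply, LinearMap.mulLeft_apply,
    LinearMap.mulRight_apply, complement, map_smul, h.topCoefficient_monomial hI, index_iff]
  split_ifs with hk
  · have param_pow : s⁻¹ ^ ((p - 1 - j) * (k' + (p - 1) * k)) = 1 :=
      (pow_eq_pow_of_modEq ((modEq_iff.mpr hk.2.2).mul_left _) h.prim.inv.pow_eq_one).trans
        (by simp)
    rw [param_pow, one_smul, smul_eq_mul, inv_mul_cancel₀ hc]
  · simp

variable {Δ : R →ₐ[K] R ⊗[K] R} {J : R →ₗ[K] K}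

theorem isRightInvariant_of_isTopCoefficient (h : IsPoincareTriple p s x y d)
    (hgen : Algebra.adjoin K {x, y, d} = ⊤) (hΔ : IsPoincareComul p x y d Δ)
    (hI : IsTopCoefficient p x y d c I) : IsRightInvariant Δ I := by
  suffices (TensorProduct.rid K R).toLinearMap ∘ₗ TensorProduct.map LinearMap.id I ∘ₗ
      Δ.toLinearMap = I.smulRight 1 from LinearMap.congr_fun this
  refine h.linearMap_ext hgen fun n m k hn hm => ?_
  change TensorProduct.rid K R (TensorProduct.map LinearMap.id I (Δ _)) = I _ • 1
  -- For `n, m < p` a proper factor `x ^ a' * y ^ b'` of `x ^ n * y ^ m` is never the top monomial.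
  rw [h.rid_map_comul_monomial hΔ, ← Finset.sum_product',
    Finset.sum_eq_single_of_mem ((0, n), (0, m)) (by simp)]
  · simp only [h.topCoefficient_monomial hI]
    split_ifs with htop
    · obtain ⟨rfl, rfl, hk⟩ := htop
      rw [h.d_pow_congr ((add_pred_mul_modEq_zero h.pos (p - 1)).add hk)]
      simp [comulCoeff]
    · simp
  · rintro ⟨⟨a, a'⟩, b, b'⟩ hab hne
    simp only [Finset.mem_product, mem_antidiagonal] at hab
    have not_top : ¬(a' = p - 1 ∧ b' = p - 1 ∧ k ≡ 0 [MOD p]) := fun ⟨_, _, _⟩ =>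
      hne (by simp only [Prod.mk.injEq]; omega)
    rw [h.topCoefficient_monomial hI, if_neg not_top, mul_zero, zero_smul]

theorem isLeftInvariant_of_isTopCoefficient (h : IsPoincareTriple p s x y d)
    (hgen : Algebra.adjoin K {x, y, d} = ⊤) (hΔ : IsPoincareComul p x y d Δ)
    (hI : IsTopCoefficient p x y d c I) : IsLeftInvariant Δ I := by
  suffices (TensorProduct.lid K R).toLinearMap ∘ₗ TensorProduct.map I LinearMap.id ∘ₗ
      Δ.toLinearMap = I.smulRight 1 from LinearMap.congr_fun this
  refine h.linearMap_ext hgen fun n m k hn hm => ?_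
  change TensorProduct.lid K R (TensorProduct.map I LinearMap.id (Δ _)) = I _ • 1
  rw [h.lid_map_comul_monomial hΔ, ← Finset.sum_product',
    Finset.sum_eq_single_of_mem ((n, 0), (m, 0)) (by simp)]
  · simp only [h.topCoefficient_monomial hI, mul_zero, zero_add]
    split_ifs with htop
    · simp [h.d_pow_congr htop.2.2, comulCoeff]
    · simp
  · rintro ⟨⟨a, a'⟩, b, b'⟩ hab hne
    simp only [Finset.mem_product, mem_antidiagonal] at hab
    have not_top : ¬(a = p - 1 ∧ b = p - 1 ∧ a' + (p - 1) * b' + k ≡ 0 [MOD p]) :=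
      fun ⟨_, _, _⟩ => hne (by simp only [Prod.mk.injEq]; omega)
    rw [h.topCoefficient_monomial hI, if_neg not_top, mul_zero, zero_smul]

theorem comulCoeff_mul_of_isRightInvariant (h : IsPoincareTriple p s x y d)
    (hΔ : IsPoincareComul p x y d Δ) (hI : IsTopCoefficient p x y d c I) (hc : c ≠ 0)
    (hJ : IsRightInvariant Δ J) {i j : ℕ} (hi : i < p) (hj : j < p) (n m k : ℕ) :
    comulCoeff s (i + n) (j + m) (i, n) (j, m) * J (x ^ n * y ^ m * d ^ k) =
      if i = 0 ∧ j = 0 ∧ n + (p - 1) * m + k ≡ 0 [MOD p] then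
        J (x ^ (i + n) * y ^ (j + m) * d ^ k) else 0 := by
  obtain ⟨φ, hφ⟩ := h.exists_monomial_dual hI hc hi hj (n + (p - 1) * m + k)
  have hφ_one := hφ 0 0 0
  have coeff_eq := congrArg φ (hJ (x ^ (i + n) * y ^ (j + m) * d ^ k))
  simp only [pow_zero, mul_one] at hφ_one
  rw [h.rid_map_comul_monomial hΔ, ← Finset.sum_product', map_sum,
    Finset.sum_eq_single_of_mem ((i, n), (j, m)) (by simp), map_smul, map_smul, hφ,
    hφ_one, if_pos ⟨rfl, rfl, rfl⟩] at coeff_eq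
  · simpa [eq_comm, Nat.ModEq.comm] using coeff_eq
  · rintro ⟨⟨a, a'⟩, b, b'⟩ hab hne
    simp only [Finset.mem_product, mem_antidiagonal] at hab
    have not_ij : ¬(a = i ∧ b = j ∧
        a' + (p - 1) * b' + k ≡ n + (p - 1) * m + k [MOD p]) :=
      fun ⟨_, _, _⟩ => hne (by simp only [Prod.mk.injEq]; omega)
    rw [map_smul, hφ, if_neg not_ij, smul_zero]

theorem comulCoeff_mul_of_isLeftInvariant (h : IsPoincareTriple p s x y d)
    (hΔ : IsPoincareComul p x y d Δ) (hI : IsTopCoefficient p x y d c I) (hc : c ≠ 0)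
    (hJ : IsLeftInvariant Δ J) {i j : ℕ} (hi : i < p) (hj : j < p) (n m k : ℕ) :
    comulCoeff s (n + i) (m + j) (n, i) (m, j) *
        J (x ^ n * y ^ m * d ^ (i + (p - 1) * j + k)) =
      if i = 0 ∧ j = 0 ∧ k ≡ 0 [MOD p] then J (x ^ (n + i) * y ^ (m + j) * d ^ k) else 0 := by
  obtain ⟨φ, hφ⟩ := h.exists_monomial_dual hI hc hi hj k
  have hφ_one := hφ 0 0 0
  have coeff_eq := congrArg φ (hJ (x ^ (n + i) * y ^ (m + j) * d ^ k))
  simp only [pow_zero, mul_one] at hφ_one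
  rw [h.lid_map_comul_monomial hΔ, ← Finset.sum_product', map_sum,
    Finset.sum_eq_single_of_mem ((n, i), (m, j)) (by simp), map_smul, map_smul, hφ,
    hφ_one, if_pos ⟨rfl, rfl, rfl⟩] at coeff_eq
  · simpa [eq_comm, Nat.ModEq.comm] using coeff_eq
  · rintro ⟨⟨a, a'⟩, b, b'⟩ hab hne
    simp only [Finset.mem_product, mem_antidiagonal] at hab
    have not_ij : ¬(a' = i ∧ b' = j ∧ k ≡ k [MOD p]) :=
      fun ⟨_, _, _⟩ => hne (by simp only [Prod.mk.injEq]; omega)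
    rw [map_smul, hφ, if_neg not_ij, smul_zero]

theorem eq_smul_of_apply_monomial_eq_zero (h : IsPoincareTriple p s x y d)
    (hgen : Algebra.adjoin K {x, y, d} = ⊤) (hI : IsTopCoefficient p x y d c I) (hc : c ≠ 0)
    (x_not_top : ∀ n m k, n + 1 < p → J (x ^ n * y ^ m * d ^ k) = 0)
    (y_not_top : ∀ n m k, m + 1 < p → J (x ^ n * y ^ m * d ^ k) = 0)
    (d_not_top : ∀ k, ¬k ≡ 0 [MOD p] → J (x ^ (p - 1) * y ^ (p - 1) * d ^ k) = 0) :
    J = (J (x ^ (p - 1) * y ^ (p - 1)) / c) • I := by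
  refine h.linearMap_ext hgen fun n m k hn hm => ?_
  rw [LinearMap.smul_apply, h.topCoefficient_monomial hI, smul_eq_mul]
  rcases (Nat.le_sub_one_of_lt hn).lt_or_eq with hn' | rfl
  · rw [x_not_top n m k (by omega), if_neg (by omega), mul_zero]
  rcases (Nat.le_sub_one_of_lt hm).lt_or_eq with hm' | rfl
  · rw [y_not_top _ m k (by omega), if_neg (by omega), mul_zero]
  by_cases hk : k ≡ 0 [MOD p]
  · rw [h.d_pow_congr hk, pow_zero, mul_one, if_pos ⟨rfl, rfl, hk⟩, div_mul_cancel₀ _ hc]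
  · rw [d_not_top k hk, if_neg fun htop => hk htop.2.2, mul_zero]

theorem exists_eq_smul_of_isRightInvariant (h : IsPoincareTriple p s x y d)
    (hgen : Algebra.adjoin K {x, y, d} = ⊤) (hΔ : IsPoincareComul p x y d Δ)
    (hI : IsTopCoefficient p x y d c I) (hc : c ≠ 0) (hJ : IsRightInvariant Δ J) :
    ∃ r : K, J = r • I := by
  have hp := h.pos
  refine ⟨_, h.eq_smul_of_apply_monomial_eq_zero hgen hI hc
    (fun n m k hn => ?_) (fun n m k hm => ?_) (fun k hk => ?_)⟩
  · have coeff_ne_zero : comulCoeff s (1 + n) (0 + m) (1, n) (0, m) ≠ 0 := by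
      simpa [comulCoeff, gaussBinom_one_right] using
        geom_sum_ne_zero_of_isPrimitiveRoot h.prim.inv (by omega) (by omega : 1 + n < p)
    have coeff_mul := h.comulCoeff_mul_of_isRightInvariant hΔ hI hc hJ (i := 1) (j := 0)
      (by omega) hp n m k
    exact (mul_eq_zero.mp (by simpa using coeff_mul)).resolve_left coeff_ne_zero
  · have coeff_ne_zero : comulCoeff s (0 + n) (1 + m) (0, n) (1, m) ≠ 0 := by
      simpa [comulCoeff, gaussBinom_one_right, h.param_ne_zero] using
        geom_sum_ne_zero_of_isPrimitiveRoot h.prim (by omega) (by omega : 1 + m < p)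
    have coeff_mul := h.comulCoeff_mul_of_isRightInvariant hΔ hI hc hJ (i := 0) (j := 1)
      hp (by omega) n m k
    exact (mul_eq_zero.mp (by simpa using coeff_mul)).resolve_left coeff_ne_zero
  · have exponent_ne : ¬p - 1 + (p - 1) * (p - 1) + k ≡ 0 [MOD p] := fun hexp =>
      hk ((add_pred_mul_modEq_zero hp (p - 1)).add_left_cancel hexp)
    simpa [comulCoeff, exponent_ne] using
      h.comulCoeff_mul_of_isRightInvariant hΔ hI hc hJ hp hp (p - 1) (p - 1) k

theorem exists_eq_smul_of_isLeftInvariant (h : IsPoincareTriple p s x y d)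
    (hgen : Algebra.adjoin K {x, y, d} = ⊤) (hΔ : IsPoincareComul p x y d Δ)
    (hI : IsTopCoefficient p x y d c I) (hc : c ≠ 0) (hJ : IsLeftInvariant Δ J) :
    ∃ r : K, J = r • I := by
  have hp := h.pos
  refine ⟨_, h.eq_smul_of_apply_monomial_eq_zero hgen hI hc
    (fun n m k hn => ?_) (fun n m k hm => ?_) (fun k hk => ?_)⟩
  · have coeff_ne_zero : comulCoeff s (n + 1) (m + 0) (n, 1) (m, 0) ≠ 0 := by
      simpa [comulCoeff, gaussBinom_succ_self, h.param_ne_zero] using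
        geom_sum_ne_zero_of_isPrimitiveRoot h.prim.inv (by omega) hn
    have coeff_mul := h.comulCoeff_mul_of_isLeftInvariant hΔ hI hc hJ (i := 1) (j := 0)
      (by omega) hp n m (p - 1 + k)
    have exponent_modEq : 1 + (p - 1) * 0 + (p - 1 + k) ≡ k [MOD p] := by
      rw [show 1 + (p - 1) * 0 + (p - 1 + k) = p + k by omega]
      exact Nat.add_modEq_left
    rw [h.d_pow_congr exponent_modEq, if_neg (by simp)] at coeff_mul
    exact (mul_eq_zero.mp coeff_mul).resolve_left coeff_ne_zero
  · have coeff_ne_zero : comulCoeff s (n + 0) (m + 1) (n, 0) (m, 1) ≠ 0 := by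
      simpa [comulCoeff, gaussBinom_succ_self] using
        geom_sum_ne_zero_of_isPrimitiveRoot h.prim (by omega) hm
    have coeff_mul := h.comulCoeff_mul_of_isLeftInvariant hΔ hI hc hJ (i := 0) (j := 1)
      hp (by omega) n m (1 + k)
    have exponent_modEq : 0 + (p - 1) * 1 + (1 + k) ≡ k [MOD p] := by
      rw [show 0 + (p - 1) * 1 + (1 + k) = p + k by omega]
      exact Nat.add_modEq_left
    rw [h.d_pow_congr exponent_modEq, if_neg (by simp)] at coeff_mul
    exact (mul_eq_zero.mp coeff_mul).resolve_left coeff_ne_zero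
  · simpa [comulCoeff, hk] using
      h.comulCoeff_mul_of_isLeftInvariant hΔ hI hc hJ hp hp (p - 1) (p - 1) k

end Invariance

end IsPoincareTriple

theorem isPrimitiveRoot_q_sq {p : ℕ} (hp : Odd p) : IsPrimitiveRoot (q p ^ 2) p :=
  (Complex.isPrimitiveRoot_exp p hp.pos.ne').pow_of_coprime 2 (Nat.coprime_two_left.mpr hp)

theorem isPoincareTriple_generators {p : ℕ} (hp : Odd p) :
    IsPoincareTriple p (q p ^ 2) (ηp p) (ηm p) (dl p) where
  pos := hp.pos
  prim := isPrimitiveRoot_q_sq hp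
  y_mul_x := by simpa [ηp, ηm] using RingQuot.mkAlgHom_rel ℂ (ERel.commEta (p := p))
  x_mul_d := by simpa [ηp, dl] using RingQuot.mkAlgHom_rel ℂ (ERel.commEpD (p := p))
  y_mul_d := by simpa [ηm, dl] using RingQuot.mkAlgHom_rel ℂ (ERel.commEmD (p := p))
  d_pow := by simpa [dl] using RingQuot.mkAlgHom_rel ℂ (ERel.deltaPow (p := p))
  x_pow := by simpa [ηp] using RingQuot.mkAlgHom_rel ℂ (ERel.epPow (p := p))
  y_pow := by simpa [ηm] using RingQuot.mkAlgHom_rel ℂ (ERel.emPow (p := p))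

theorem adjoin_generators_eq_top (p : ℕ) :
    Algebra.adjoin ℂ {ηp p, ηm p, dl p} = (⊤ : Subalgebra ℂ (A p)) := by
  have range_generators : RingQuot.mkAlgHom ℂ (ERel p) '' Set.range (FreeAlgebra.ι ℂ) =
      {ηp p, ηm p, dl p} := by
    ext a
    simp only [← Set.range_comp, Set.mem_range, Function.comp_apply, Set.mem_insert_iff,
      Set.mem_singleton_iff]
    constructor
    · rintro ⟨_ | _ | _, rfl⟩
      exacts [.inl rfl, .inr (.inl rfl), .inr (.inr rfl)]
    · rintro (rfl | rfl | rfl)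
      exacts [⟨.ep, rfl⟩, ⟨.em, rfl⟩, ⟨.d, rfl⟩]
  rw [← range_generators, ← AlgHom.map_adjoin, FreeAlgebra.adjoin_range_ι, Algebra.map_top,
    AlgHom.range_eq_top]
  exact RingQuot.mkAlgHom_surjective ℂ (ERel p)

theorem statement3_general {K R : Type*} [Field K] [Semiring R] [Algebra K R] {p : ℕ} {s c : K}
    {x y d : R} (h : IsPoincareTriple p s x y d) (hgen : Algebra.adjoin K {x, y, d} = ⊤)
    {Δ : R →ₐ[K] R ⊗[K] R} (hΔ : IsPoincareComul p x y d Δ)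
    {I : R →ₗ[K] K} (hI : IsTopCoefficient p x y d c I) (hc : c ≠ 0) :
    IsRightInvariant Δ I ∧ IsLeftInvariant Δ I ∧
      ∀ J : R →ₗ[K] K, IsRightInvariant Δ J ∨ IsLeftInvariant Δ J → ∃ r : K, J = r • I :=
  ⟨h.isRightInvariant_of_isTopCoefficient hgen hΔ hI,
    h.isLeftInvariant_of_isTopCoefficient hgen hΔ hI,
    fun _ hJ => hJ.elim (h.exists_eq_smul_of_isRightInvariant hgen hΔ hI hc)
      (h.exists_eq_smul_of_isLeftInvariant hgen hΔ hI hc)⟩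

/-- The linear functional `I` with `I(η₊^{p-1}η₋^{p-1}) = q⁻¹` and `I = 0` on all other
basis monomials is the unique (up to scalar) two-sided invariant integral on `E(1,1|p)`. -/
theorem statement3 (p : ℕ) (hp : Odd p) (hp3 : 3 ≤ p)
    (Δ : A p →ₐ[ℂ] (A p ⊗[ℂ] A p))
    (hΔ₁ : Δ (ηp p) = ηp p ⊗ₜ[ℂ] 1 + dl p ⊗ₜ[ℂ] ηp p)
    (hΔ₂ : Δ (ηm p) = ηm p ⊗ₜ[ℂ] 1 + (dl p ^ (p - 1)) ⊗ₜ[ℂ] ηm p)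
    (hΔ₃ : Δ (dl p) = dl p ⊗ₜ[ℂ] dl p)
    (I : A p →ₗ[ℂ] ℂ)
    (hI : ∀ n m k : ℕ, n < p → m < p → k < p →
      I (ηp p ^ n * ηm p ^ m * dl p ^ k) =
        if n = p - 1 ∧ m = p - 1 ∧ k = 0 then (q p)⁻¹ else 0) :
    -- right invariance: (id ⊗ I)(Δ a) = I(a)·1
    (∀ a : A p,
      (TensorProduct.rid ℂ (A p)) ((TensorProduct.map LinearMap.id I) (Δ a)) = I a • 1) ∧
    -- left invariance: (I ⊗ id)(Δ a) = I(a)·1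
    (∀ a : A p,
      (TensorProduct.lid ℂ (A p)) ((TensorProduct.map I LinearMap.id) (Δ a)) = I a • 1) ∧
    -- uniqueness up to a complex scalar
    (∀ J : A p →ₗ[ℂ] ℂ,
      (∀ a : A p,
        (TensorProduct.rid ℂ (A p)) ((TensorProduct.map LinearMap.id J) (Δ a)) = J a • 1) →
      (∀ a : A p,
        (TensorProduct.lid ℂ (A p)) ((TensorProduct.map J LinearMap.id) (Δ a)) = J a • 1) →
      ∃ c : ℂ, J = c • I) := by
  have ⟨right, left, unique⟩ := statement3_general (isPoincareTriple_generators hp)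
    (adjoin_generators_eq_top p) ⟨hΔ₁, hΔ₂, hΔ₃⟩ hI (inv_ne_zero (Complex.exp_ne_zero _))
  exact ⟨right, left, fun J hJ _ => unique J (.inl hJ)⟩
end
end

section
/- There exists a unique bilinear form ⟨·,·⟩ : U_f × A → ℂ satisfying the Hopf-pairing axioms ⟨uv, x⟩ = Σ ⟨u, x_{(1)}⟩⟨v, x_{(2)}⟩ (where Δ(x) = Σ x_{(1)}⊗x_{(2)}), ⟨u, xy⟩ = Σ ⟨u_{(1)}, x⟩⟨u_{(2)}, y⟩ (where Δ_U(u) = Σ u_{(1)}⊗u_{(2)}), ⟨1, x⟩ = ε(x), ⟨u, 1⟩ = ε_U(u), together with the generator values ⟨κ, δ⟩ = q, ⟨κ^{−1}, δ⟩ = q^{−1}, ⟨κ^{±1}, η₊⟩ = ⟨κ^{±1}, η₋⟩ = 0, ⟨p±, η±⟩ = i q^{±1/2}, ⟨p±, η∓⟩ = 0, ⟨p±, δ⟩ = 0. This pairing satisfies ⟨p±^n, η±^m⟩ = i^n q^{±n/2} [n]! δ_{nm} and ⟨κ^n, δ^m⟩ = q^{nm} for 0 ≤ n,m ≤ p−1,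 and it is nondegenerate: U_f and A are in nondegenerate duality. -/
open scoped TensorProduct

noncomputable section

/-- Generators `p₊, p₋, κ, κ⁻¹` of `U_f = U(e(1,1|p))`. -/
inductive UGen : Type
  | pp : UGen
  | pm : UGen
  | k : UGen
  | kinv : UGen

open FreeAlgebra in
/-- The defining relations of `U_f`: the two-sided ideal generated by `p₊p₋ − p₋p₊`,
`p₊κ − q⁻¹κp₊`, `p₋κ − qκp₋`, `κκ⁻¹ − 1`, `κ⁻¹κ − 1`, `κ^p − 1`, `p₊^p`, `p₋^p`. -/
inductive UfRel (p : ℕ) : FreeAlgebra ℂ UGen → FreeAlgebra ℂ UGen → Prop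
  | commP : UfRel p (ι ℂ UGen.pp * ι ℂ UGen.pm) (ι ℂ UGen.pm * ι ℂ UGen.pp)
  | ppK : UfRel p (ι ℂ UGen.pp * ι ℂ UGen.k) ((q p)⁻¹ • (ι ℂ UGen.k * ι ℂ UGen.pp))
  | pmK : UfRel p (ι ℂ UGen.pm * ι ℂ UGen.k) (q p • (ι ℂ UGen.k * ι ℂ UGen.pm))
  | kKinv : UfRel p (ι ℂ UGen.k * ι ℂ UGen.kinv) 1
  | kinvK : UfRel p (ι ℂ UGen.kinv * ι ℂ UGen.k) 1
  | kPow : UfRel p (ι ℂ UGen.k ^ p) 1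
  | ppPow : UfRel p (ι ℂ UGen.pp ^ p) 0
  | pmPow : UfRel p (ι ℂ UGen.pm ^ p) 0

/-- The finite quantum algebra `U_f = U(e(1,1|p))`. -/
abbrev Uf (p : ℕ) : Type := RingQuot (UfRel p)

/-- `p₊ ∈ U_f`. -/
def up (p : ℕ) : Uf p := RingQuot.mkAlgHom ℂ (UfRel p) (FreeAlgebra.ι ℂ UGen.pp)

/-- `p₋ ∈ U_f`. -/
def um (p : ℕ) : Uf p := RingQuot.mkAlgHom ℂ (UfRel p) (FreeAlgebra.ι ℂ UGen.pm)

/-- `κ ∈ U_f`. -/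
def uk (p : ℕ) : Uf p := RingQuot.mkAlgHom ℂ (UfRel p) (FreeAlgebra.ι ℂ UGen.k)

/-- `κ⁻¹ ∈ U_f`. -/
def ukinv (p : ℕ) : Uf p := RingQuot.mkAlgHom ℂ (UfRel p) (FreeAlgebra.ι ℂ UGen.kinv)

/-!
The functionals on the bialgebra `A` form an algebra `A*` under convolution, and a Hopf pairing of
`U_f` with `A` is an algebra homomorphism `U_f → A*` compatible with the multiplication of `A`. By
the coproduct of `U_f`, the elements `κ` and `κ⁻¹` have to act as characters of `A` and `p₊`, `p₋`
as skew derivations with respect to them, so they are determined by their values on generators.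
Conversely, the skew derivations exist as off-diagonal entries of `2 × 2` upper triangular
representations of `A`, and right translation by these functionals acts on the monomials
`δ^a η₊^b η₋^c` by explicit scalars and shifts, which gives the defining relations of `U_f`.

In the monomial bases, `κ^r p₊^b p₋^c` pairs to zero with `δ^a η₊^e η₋^f` unless `(e, f) = (b, c)`.
For fixed `(b, c)` the remaining block is, up to nonzero column factors, a Vandermonde matrix in
distinct powers of `q`, so the pairing is nondegenerate.
-/

section Spanning

variable {R S : Type*} [CommRing R] [Ring S] [Algebra R S]

lemma pow_mul_of_mul_eq_smul {x y : S} {r : R} (h : x * y = r • (y * x)) (n : ℕ) :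
    x ^ n * y = r ^ n • (y * x ^ n) := by
  induction n with
  | zero => simp
  | succ n ih =>
    rw [pow_succ, mul_assoc, h, mul_smul_comm, ← mul_assoc, ih, smul_mul_assoc, smul_smul,
      mul_assoc, pow_succ' r]

lemma mul_pow_of_mul_eq_smul {x y : S} {r : R} (h : x * y = r • (y * x)) (n : ℕ) :
    x * y ^ n = r ^ n • (y ^ n * x) := by
  induction n with
  | zero => simp
  | succ n ih =>
    rw [pow_succ, ← mul_assoc, ih, smul_mul_assoc, mul_assoc, h, mul_smul_comm, smul_smul,
      mul_assoc, pow_succ r]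

lemma pow_mul_pow_mul_pow_mem_span {x y d : S} {n : ℕ} (hn : n ≠ 0) (hd : d ^ n = 1)
    (hx : x ^ n = 0) (hy : y ^ n = 0) (a b c : ℕ) :
    d ^ a * (x ^ b * y ^ c) ∈ Submodule.span R (Set.range fun i : Fin n × Fin n × Fin n =>
      d ^ (i.1 : ℕ) * (x ^ (i.2.1 : ℕ) * y ^ (i.2.2 : ℕ))) := by
  rcases le_or_gt n b with hb | hb
  · simp [pow_eq_zero_of_le hb hx]
  rcases le_or_gt n c with hc | hc
  · simp [pow_eq_zero_of_le hc hy]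
  rw [pow_eq_pow_mod a hd]
  exact Submodule.subset_span
    ⟨(⟨a % n, Nat.mod_lt _ (Nat.pos_of_ne_zero hn)⟩, ⟨b, hb⟩, ⟨c, hc⟩), rfl⟩

theorem span_pow_mul_pow_mul_pow_eq_top {x y d : S} {α β γ : R} {n : ℕ} (hn : n ≠ 0)
    (hyx : y * x = α • (x * y)) (hxd : x * d = β • (d * x)) (hyd : y * d = γ • (d * y))
    (hd : d ^ n = 1) (hx : x ^ n = 0) (hy : y ^ n = 0)
    (hgen : Algebra.adjoin R {d, x, y} = ⊤) :
    Submodule.span R (Set.range fun i : Fin n × Fin n × Fin n =>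
      d ^ (i.1 : ℕ) * (x ^ (i.2.1 : ℕ) * y ^ (i.2.2 : ℕ))) = ⊤ := by
  set M := Submodule.span R (Set.range fun i : Fin n × Fin n × Fin n =>
    d ^ (i.1 : ℕ) * (x ^ (i.2.1 : ℕ) * y ^ (i.2.2 : ℕ)))
  have hM : ∀ a b c : ℕ, d ^ a * (x ^ b * y ^ c) ∈ M :=
    pow_mul_pow_mul_pow_mem_span hn hd hx hy
  have mul_mem_of_forall : ∀ t : S, (∀ a b c : ℕ, t * (d ^ a * (x ^ b * y ^ c)) ∈ M) →
      M ≤ M.comap (LinearMap.mulLeft R t) := fun t ht =>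
    Submodule.span_le.mpr <| Set.range_subset_iff.mpr fun i => ht _ _ _
  have hgenM : ∀ t ∈ ({d, x, y} : Set S), M ≤ M.comap (LinearMap.mulLeft R t) := by
    rintro t (rfl | rfl | rfl) <;> refine mul_mem_of_forall _ fun a b c => ?_
    · rw [← mul_assoc, ← pow_succ']
      exact hM _ _ _
    · rw [← mul_assoc, mul_pow_of_mul_eq_smul hxd, smul_mul_assoc, mul_assoc, ← mul_assoc t,
        ← pow_succ']
      exact M.smul_mem _ (hM _ _ _)
    · rw [← mul_assoc, mul_pow_of_mul_eq_smul hyd, smul_mul_assoc, mul_assoc, ← mul_assoc t,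
        mul_pow_of_mul_eq_smul hyx, smul_mul_assoc, mul_smul_comm, mul_assoc, ← pow_succ']
      exact M.smul_mem _ (M.smul_mem _ (hM _ _ _))
  have hmul : ∀ t ∈ Algebra.adjoin R {d, x, y}, M ≤ M.comap (LinearMap.mulLeft R t) := by
    intro t ht
    induction ht using Algebra.adjoin_induction with
    | mem t ht => exact hgenM t ht
    | algebraMap r => exact fun s hs => by simpa [← Algebra.smul_def] using M.smul_mem r hs
    | add s t _ _ hs ht => exact fun v hv => by simpa [add_mul] using M.add_mem (hs hv) (ht hv)
    | mul s t _ _ hs ht => exact fun v hv => by simpa [mul_assoc] using hs (ht hv)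
  refine eq_top_iff.mpr fun t _ => ?_
  have hone : (1 : S) ∈ M := by simpa using hM 0 0 0
  simpa using hmul t (hgen ▸ Algebra.mem_top) hone

end Spanning

section Nondegeneracy

theorem separatingLeft_of_gram {R V W ι κ : Type*} [CommRing R] [AddCommGroup V] [Module R V]
    [AddCommGroup W] [Module R W] [Finite ι] [Finite κ] {B : V →ₗ[R] Module.Dual R W}
    {v : ι → V} {w : κ → W} (hv : Submodule.span R (Set.range v) = ⊤)
    (hG : (Matrix.of fun i j => B (v i) (w j)).SeparatingLeft) : B.SeparatingLeft := by
  intro u hu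
  cases nonempty_fintype ι
  obtain ⟨c, rfl⟩ :=
    (Submodule.mem_span_range_iff_exists_fun R).mp (hv ▸ Submodule.mem_top (x := u))
  have hc : c = 0 := hG.eq_zero_of_vecMul_eq_zero (funext fun j => by
    simpa [Matrix.vecMul, dotProduct] using hu (w j))
  simp [hc]

theorem nondegenerate_of_gram {R V W ι κ : Type*} [CommRing R] [AddCommGroup V] [Module R V]
    [AddCommGroup W] [Module R W] [Finite ι] [Finite κ] {B : V →ₗ[R] Module.Dual R W}
    {v : ι → V} {w : κ → W} (hv : Submodule.span R (Set.range v) = ⊤)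
    (hw : Submodule.span R (Set.range w) = ⊤)
    (hG : (Matrix.of fun i j => B (v i) (w j)).Nondegenerate) : B.Nondegenerate :=
  ⟨separatingLeft_of_gram hv hG.separatingLeft,
    LinearMap.flip_separatingLeft.mp
      (separatingLeft_of_gram (w := v) hw hG.separatingRight.separatingLeft_transpose)⟩

end Nondegeneracy

section RootOfUnity

lemma geom_sum_sq_eq {K : Type*} [Field K] {r : K} (hr : r ≠ 0) (hr2 : r ^ 2 ≠ 1) (n : ℕ) :
    ∑ j ∈ Finset.range (n + 1), (r ^ 2) ^ j =
      r ^ n * ((r ^ (n + 1) - r⁻¹ ^ (n + 1)) / (r - r⁻¹)) := by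
  have h1 : r ^ 2 - 1 ≠ 0 := sub_ne_zero.mpr hr2
  have h2 : r - r⁻¹ ≠ 0 := by
    rwa [sub_ne_zero, Ne, ← mul_eq_one_iff_eq_inv₀ hr, ← sq]
  rw [geom_sum_eq hr2, mul_div_assoc', div_eq_div_iff h1 h2, inv_pow]
  field_simp
  ring

lemma q_ne_zero (p : ℕ) : q p ≠ 0 := Complex.exp_ne_zero _

lemma qh_ne_zero (p : ℕ) : qh p ≠ 0 := Complex.exp_ne_zero _

lemma isPrimitiveRoot_q (p : ℕ) [NeZero p] : IsPrimitiveRoot (q p) p :=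
  Complex.isPrimitiveRoot_exp p (NeZero.ne p)

lemma q_pow_self (p : ℕ) [NeZero p] : q p ^ p = 1 := (isPrimitiveRoot_q p).pow_eq_one

lemma q_pow_pred (p : ℕ) [NeZero p] : q p ^ (p - 1) = (q p)⁻¹ :=
  eq_inv_of_mul_eq_one_left (by rw [pow_sub_one_mul (NeZero.ne p), q_pow_self])

lemma q_sq_pow_pred (p : ℕ) [NeZero p] : (q p ^ 2) ^ (p - 1) = (q p)⁻¹ ^ 2 := by
  rw [← pow_mul, mul_comm, pow_mul, q_pow_pred]

lemma q_sq_pow_ne_one {p n : ℕ} (hp : Odd p) (hn : 0 < n) (hnp : n < p) : (q p ^ 2) ^ n ≠ 1 := by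
  have : NeZero p := ⟨by omega⟩
  rw [← pow_mul, Ne, (isPrimitiveRoot_q p).pow_eq_one_iff_dvd,
    hp.coprime_two_right.dvd_mul_left]
  exact Nat.not_dvd_of_pos_of_lt hn hnp

lemma q_sq_ne_one {p : ℕ} (hp : Odd p) (hp1 : 1 < p) : q p ^ 2 ≠ 1 := by
  simpa using q_sq_pow_ne_one hp one_pos hp1

lemma geom_sum_q_sq {p : ℕ} (h : q p ^ 2 ≠ 1) (n : ℕ) :
    ∑ j ∈ Finset.range (n + 1), (q p ^ 2) ^ j = q p ^ n * qnum p (n + 1) :=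
  geom_sum_sq_eq (q_ne_zero p) h n

lemma geom_sum_q_inv_sq {p : ℕ} (h : q p ^ 2 ≠ 1) (n : ℕ) :
    ∑ j ∈ Finset.range (n + 1), ((q p)⁻¹ ^ 2) ^ j = (q p)⁻¹ ^ n * qnum p (n + 1) := by
  rw [geom_sum_sq_eq (inv_ne_zero (q_ne_zero p)) (by simpa using h), inv_inv, qnum,
    ← neg_sub (q p ^ _), ← neg_sub (q p), neg_div_neg_eq]

lemma qfact_succ (p n : ℕ) : qfact p (n + 1) = qfact p n * qnum p (n + 1) :=
  Finset.prod_range_succ _ _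

lemma qnum_ne_zero {p n : ℕ} (hp : Odd p) (hn : 0 < n) (hnp : n < p) : qnum p n ≠ 0 := by
  have sub_inv_ne_zero {m : ℕ} (hm : 0 < m) (hmp : m < p) : q p ^ m - (q p)⁻¹ ^ m ≠ 0 := by
    rw [inv_pow, sub_ne_zero, Ne, ← mul_eq_one_iff_eq_inv₀ (pow_ne_zero m (q_ne_zero p)),
      ← sq, pow_right_comm]
    exact q_sq_pow_ne_one hp hm hmp
  have h1 := sub_inv_ne_zero one_pos (by omega)
  exact div_ne_zero (sub_inv_ne_zero hn hnp) (by simpa using h1)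

lemma qfact_ne_zero {p n : ℕ} (hp : Odd p) (hnp : n < p) : qfact p n ≠ 0 :=
  Finset.prod_ne_zero_iff.mpr fun j hj =>
    qnum_ne_zero hp j.succ_pos (by have := Finset.mem_range.mp hj; omega)

end RootOfUnity

section Presentation

lemma adjoin_range_mkAlgHom_ι {R X : Type*} [CommRing R]
    (r : FreeAlgebra R X → FreeAlgebra R X → Prop) :
    Algebra.adjoin R (Set.range fun g => RingQuot.mkAlgHom R r (FreeAlgebra.ι R g)) = ⊤ := by
  rw [Set.range_comp' (RingQuot.mkAlgHom R r), ← AlgHom.map_adjoin, FreeAlgebra.adjoin_range_ι,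
    Algebra.map_top, AlgHom.range_eq_top]
  exact RingQuot.mkAlgHom_surjective R r

variable (p : ℕ)

lemma ηm_mul_ηp : ηm p * ηp p = (q p ^ 2) • (ηp p * ηm p) := by
  simpa [ηm, ηp] using RingQuot.mkAlgHom_rel ℂ (ERel.commEta (p := p))

lemma ηp_mul_dl : ηp p * dl p = (q p ^ 2) • (dl p * ηp p) := by
  simpa [dl, ηp] using RingQuot.mkAlgHom_rel ℂ (ERel.commEpD (p := p))

lemma ηm_mul_dl : ηm p * dl p = (q p ^ 2) • (dl p * ηm p) := by
  simpa [dl, ηm] using RingQuot.mkAlgHom_rel ℂ (ERel.commEmD (p := p))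

lemma dl_pow_self : dl p ^ p = 1 := by
  simpa [dl] using RingQuot.mkAlgHom_rel ℂ (ERel.deltaPow (p := p))

lemma ηp_pow_self : ηp p ^ p = 0 := by
  simpa [ηp] using RingQuot.mkAlgHom_rel ℂ (ERel.epPow (p := p))

lemma ηm_pow_self : ηm p ^ p = 0 := by
  simpa [ηm] using RingQuot.mkAlgHom_rel ℂ (ERel.emPow (p := p))

lemma up_mul_um : up p * um p = um p * up p := by
  simpa [up, um] using RingQuot.mkAlgHom_rel ℂ (UfRel.commP (p := p))

lemma up_mul_uk : up p * uk p = (q p)⁻¹ • (uk p * up p) := by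
  simpa [up, uk] using RingQuot.mkAlgHom_rel ℂ (UfRel.ppK (p := p))

lemma um_mul_uk : um p * uk p = q p • (uk p * um p) := by
  simpa [um, uk] using RingQuot.mkAlgHom_rel ℂ (UfRel.pmK (p := p))

lemma ukinv_mul_uk : ukinv p * uk p = 1 := by
  simpa [ukinv, uk] using RingQuot.mkAlgHom_rel ℂ (UfRel.kinvK (p := p))

lemma uk_pow_self : uk p ^ p = 1 := by
  simpa [uk] using RingQuot.mkAlgHom_rel ℂ (UfRel.kPow (p := p))

lemma up_pow_self : up p ^ p = 0 := by
  simpa [up] using RingQuot.mkAlgHom_rel ℂ (UfRel.ppPow (p := p))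

lemma um_pow_self : um p ^ p = 0 := by
  simpa [um] using RingQuot.mkAlgHom_rel ℂ (UfRel.pmPow (p := p))

lemma ukinv_eq_uk_pow_pred [NeZero p] : ukinv p = uk p ^ (p - 1) :=
  left_inv_eq_right_inv (ukinv_mul_uk p) (by rw [mul_pow_sub_one (NeZero.ne p), uk_pow_self])

lemma adjoin_dl_ηp_ηm : Algebra.adjoin ℂ {dl p, ηp p, ηm p} = ⊤ := by
  rw [← adjoin_range_mkAlgHom_ι (ERel p)]
  congr 1
  ext x
  constructor
  · rintro (rfl | rfl | rfl)
    exacts [⟨Gen.d, rfl⟩, ⟨Gen.ep, rfl⟩, ⟨Gen.em, rfl⟩]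
  · rintro ⟨_ | _ | _, rfl⟩ <;> simp [dl, ηp, ηm]

lemma adjoin_uk_up_um [NeZero p] : Algebra.adjoin ℂ {uk p, up p, um p} = ⊤ := by
  rw [eq_top_iff, ← adjoin_range_mkAlgHom_ι (UfRel p), Algebra.adjoin_le_iff]
  have mem_adjoin : ∀ u ∈ ({uk p, up p, um p} : Set (Uf p)),
      u ∈ Algebra.adjoin ℂ {uk p, up p, um p} := fun _ hu => Algebra.subset_adjoin hu
  rintro _ ⟨_ | _ | _ | _, rfl⟩
  · exact mem_adjoin (up p) (by simp)
  · exact mem_adjoin (um p) (by simp)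
  · exact mem_adjoin (uk p) (by simp)
  · change ukinv p ∈ _
    rw [ukinv_eq_uk_pow_pred]
    exact pow_mem (mem_adjoin (uk p) (by simp)) _

variable {p} {R : Type*} [Ring R] [Algebra ℂ R]

/-- The homomorphism `A → R` sending `η₊, η₋, δ` to elements `x, y, d` satisfying the defining
relations of `A`. -/
def liftA (x y d : R) (hyx : y * x = (q p ^ 2) • (x * y)) (hxd : x * d = (q p ^ 2) • (d * x))
    (hyd : y * d = (q p ^ 2) • (d * y)) (hd : d ^ p = 1) (hx : x ^ p = 0) (hy : y ^ p = 0) :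
    A p →ₐ[ℂ] R :=
  RingQuot.liftAlgHom ℂ ⟨FreeAlgebra.lift ℂ fun g : Gen => Gen.casesOn g x y d, by
    rintro _ _ (_ | _ | _ | _ | _ | _) <;> simpa⟩

section liftA

variable {x y d : R} (hyx : y * x = (q p ^ 2) • (x * y)) (hxd : x * d = (q p ^ 2) • (d * x))
  (hyd : y * d = (q p ^ 2) • (d * y)) (hd : d ^ p = 1) (hx : x ^ p = 0) (hy : y ^ p = 0)

@[simp] lemma liftA_ηp : liftA x y d hyx hxd hyd hd hx hy (ηp p) = x := by
  simp [liftA, ηp, RingQuot.liftAlgHom_mkAlgHom_apply]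

@[simp] lemma liftA_ηm : liftA x y d hyx hxd hyd hd hx hy (ηm p) = y := by
  simp [liftA, ηm, RingQuot.liftAlgHom_mkAlgHom_apply]

@[simp] lemma liftA_dl : liftA x y d hyx hxd hyd hd hx hy (dl p) = d := by
  simp [liftA, dl, RingQuot.liftAlgHom_mkAlgHom_apply]

end liftA

/-- The homomorphism `U_f → R` sending `p₊, p₋, κ, κ⁻¹` to elements `x, y, k, l` satisfying the
defining relations of `U_f`. -/
def liftUf (x y k l : R) (hxy : x * y = y * x) (hxk : x * k = (q p)⁻¹ • (k * x))
    (hyk : y * k = q p • (k * y)) (hkl : k * l = 1) (hlk : l * k = 1) (hk : k ^ p = 1)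
    (hx : x ^ p = 0) (hy : y ^ p = 0) : Uf p →ₐ[ℂ] R :=
  RingQuot.liftAlgHom ℂ ⟨FreeAlgebra.lift ℂ fun g : UGen => UGen.casesOn g x y k l, by
    rintro _ _ (_ | _ | _ | _ | _ | _ | _ | _) <;> simpa⟩

section liftUf

variable {x y k l : R} (hxy : x * y = y * x) (hxk : x * k = (q p)⁻¹ • (k * x))
  (hyk : y * k = q p • (k * y)) (hkl : k * l = 1) (hlk : l * k = 1) (hk : k ^ p = 1)
  (hx : x ^ p = 0) (hy : y ^ p = 0)

@[simp] lemma liftUf_up : liftUf x y k l hxy hxk hyk hkl hlk hk hx hy (up p) = x := by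
  simp [liftUf, up, RingQuot.liftAlgHom_mkAlgHom_apply]

@[simp] lemma liftUf_um : liftUf x y k l hxy hxk hyk hkl hlk hk hx hy (um p) = y := by
  simp [liftUf, um, RingQuot.liftAlgHom_mkAlgHom_apply]

@[simp] lemma liftUf_uk : liftUf x y k l hxy hxk hyk hkl hlk hk hx hy (uk p) = k := by
  simp [liftUf, uk, RingQuot.liftAlgHom_mkAlgHom_apply]

@[simp] lemma liftUf_ukinv : liftUf x y k l hxy hxk hyk hkl hlk hk hx hy (ukinv p) = l := by
  simp [liftUf, ukinv, RingQuot.liftAlgHom_mkAlgHom_apply]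

end liftUf

theorem A_algHom_ext {S : Type*} [Semiring S] [Algebra ℂ S]
    {f g : A p →ₐ[ℂ] S} (hp : f (ηp p) = g (ηp p)) (hm : f (ηm p) = g (ηm p))
    (hd : f (dl p) = g (dl p)) : f = g :=
  AlgHom.ext_of_adjoin_eq_top (adjoin_dl_ηp_ηm p) (by rintro _ (rfl | rfl | rfl) <;> assumption)

theorem Uf_algHom_ext [NeZero p] {S : Type*} [Semiring S] [Algebra ℂ S]
    {f g : Uf p →ₐ[ℂ] S} (hp : f (up p) = g (up p))
    (hm : f (um p) = g (um p)) (hk : f (uk p) = g (uk p)) : f = g :=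
  AlgHom.ext_of_adjoin_eq_top (adjoin_uk_up_um p) (by rintro _ (rfl | rfl | rfl) <;> assumption)

end Presentation

section SkewDerivation

variable {R H : Type*} [CommRing R] [Semiring H] [Algebra R H]

/-- Functionals obeying the Leibniz rule `f(xy) = f(x) k(y) + l(x) f(y)` twisted by two characters.
In the dual algebra these are the elements with coproduct `f ⊗ k + l ⊗ f`. -/
structure IsSkewDerivation (l k : H →ₐ[R] R) (f : H →ₗ[R] R) : Prop where
  map_mul : ∀ x y, f (x * y) = f x * k y + l x * f y

namespace IsSkewDerivation

variable {l k : H →ₐ[R] R} {f g : H →ₗ[R] R}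

lemma map_one (hf : IsSkewDerivation l k f) : f 1 = 0 := by
  simpa using hf.map_mul 1 1

theorem ext_of_adjoin_eq_top (hf : IsSkewDerivation l k f) (hg : IsSkewDerivation l k g)
    {s : Set H} (hs : Algebra.adjoin R s = ⊤) (h : s.EqOn f g) : f = g := by
  ext x
  induction (hs ▸ Algebra.mem_top : x ∈ Algebra.adjoin R s) using Algebra.adjoin_induction with
  | mem x hx => exact h hx
  | algebraMap r => simp [Algebra.algebraMap_eq_smul_one, hf.map_one, hg.map_one]
  | add x y _ _ hx hy => rw [map_add, map_add, hx, hy]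
  | mul x y _ _ hx hy => rw [hf.map_mul, hg.map_mul, hx, hy]

end IsSkewDerivation

end SkewDerivation

section HopfPairing

open Coalgebra Bialgebra LinearMap

variable {R U H : Type*} [CommRing R] [Ring U] [Bialgebra R U] [Ring H] [Bialgebra R H]

/-- The right translation `x ↦ Σ x₍₁₎ f(x₍₂₎)` of a bialgebra by a functional `f`. -/
def rightTranslate (f : H →ₗ[R] R) : H →ₗ[R] H :=
  (TensorProduct.rid R H).toLinearMap ∘ₗ f.lTensor H ∘ₗ comul

lemma convMul_apply_eq_rightTranslate (g f : WithConv (H →ₗ[R] R)) (x : H) :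
    (g * f) x = g (rightTranslate f.ofConv x) := by
  rw [rightTranslate, convMul_apply, LinearMap.comp_apply, LinearMap.comp_apply]
  generalize comul (R := R) x = X
  induction X using TensorProduct.induction_on with
  | zero => simp
  | add X Y hX hY => simp only [map_add, hX, hY]
  | tmul a b => simp [mul_comm]

/-- Right translation by a character, as an algebra endomorphism. -/
def rightTranslateHom (χ : H →ₐ[R] R) : H →ₐ[R] H :=
  ((Algebra.TensorProduct.rid R R H).toAlgHom.comp
    (Algebra.TensorProduct.map (.id R H) χ)).comp (comulAlgHom R H)

lemma rightTranslate_toLinearMap (χ : H →ₐ[R] R) :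
    rightTranslate χ.toLinearMap = (rightTranslateHom χ).toLinearMap :=
  rfl

namespace IsSkewDerivation

variable {l k : H →ₐ[R] R} {f : H →ₗ[R] R}

lemma rightTranslate_mul (hf : IsSkewDerivation l k f) (x y : H) :
    rightTranslate f (x * y) =
      rightTranslate f x * rightTranslateHom k y + rightTranslateHom l x * rightTranslate f y := by
  simp only [rightTranslate, rightTranslateHom, AlgHom.comp_apply, comulAlgHom_apply,
    LinearMap.comp_apply, comul_mul]
  generalize comul (R := R) x = X
  generalize comul (R := R) y = Y
  induction X using TensorProduct.induction_on with
  | zero => simp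
  | add X X' hX hX' => simp only [map_add, add_mul, hX, hX']; abel
  | tmul a b =>
    induction Y using TensorProduct.induction_on with
    | zero => simp
    | add Y Y' hY hY' => simp only [map_add, mul_add, hY, hY']; abel
    | tmul c d => simp [hf.map_mul, add_smul, smul_smul, mul_comm]

lemma rightTranslate_one (hf : IsSkewDerivation l k f) : rightTranslate f (1 : H) = 0 := by
  simpa using hf.rightTranslate_mul 1 1

lemma rightTranslate_pow (hf : IsSkewDerivation l k f) {x z : H} {s : R}
    (hk : rightTranslateHom k x = x) (hl : rightTranslateHom l x = x)
    (hz : rightTranslate f x = z) (hs : x * z = s • (z * x)) (n : ℕ) :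
    rightTranslate f (x ^ n) = (∑ j ∈ Finset.range n, s ^ j) • (z * x ^ (n - 1)) := by
  induction n with
  | zero => simpa using hf.rightTranslate_one
  | succ n ih =>
    rw [pow_succ', hf.rightTranslate_mul, map_pow, hk, hl, hz, ih, mul_smul_comm, ← mul_assoc, hs,
      smul_mul_assoc, mul_assoc, geom_sum_succ, add_smul, one_smul, Nat.add_sub_cancel, mul_comm s,
      mul_smul, add_comm]
    cases n with
    | zero => simp
    | succ n => rw [← pow_succ', Nat.add_sub_cancel]

end IsSkewDerivation

variable (R H) in
/-- The transpose of the multiplication of `H`, as a homomorphism of convolution algebras. -/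
def compMulHom : WithConv (H →ₗ[R] R) →ₐ[R] WithConv (H ⊗[R] H →ₗ[R] R) :=
  AlgHom.ofLinearMap
    { toFun := fun f => .toConv (f.ofConv ∘ₗ mul' R H)
      map_add' := fun _ _ => rfl
      map_smul' := fun _ _ => rfl }
    (WithConv.ext (mulCoalgHom R H).counit_comp)
    (fun f g => WithConv.ext (convMul_comp_coalgHom_distrib f g (mulCoalgHom R H)))

@[simp] lemma compMulHom_apply_tmul (f : WithConv (H →ₗ[R] R)) (x y : H) :
    compMulHom R H f (x ⊗ₜ y) = f (x * y) :=
  rfl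

variable (R H) in
/-- The transpose of the unit of `H`, as a homomorphism of algebras. -/
def evalOneHom : WithConv (H →ₗ[R] R) →ₐ[R] R :=
  AlgHom.ofLinearMap
    (LinearMap.applyₗ 1 ∘ₗ (WithConv.linearEquiv R (H →ₗ[R] R)).toLinearMap)
    (counit_one (R := R) (A := H))
    (fun f g => by
      simp [convMul_apply, Algebra.TensorProduct.one_def])

@[simp] lemma evalOneHom_apply (f : WithConv (H →ₗ[R] R)) : evalOneHom R H f = f 1 :=
  rfl

variable (R H) in
/-- The map `H* ⊗ H* → (H ⊗ H)*`, as a homomorphism of convolution algebras. -/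
def dualDistribHom : WithConv (H →ₗ[R] R) ⊗[R] WithConv (H →ₗ[R] R) →ₐ[R]
    WithConv (H ⊗[R] H →ₗ[R] R) :=
  Algebra.TensorProduct.algHomOfLinearMapTensorProduct
    ((WithConv.linearEquiv R (H ⊗[R] H →ₗ[R] R)).symm.toLinearMap ∘ₗ
      TensorProduct.dualDistrib R H H ∘ₗ
        TensorProduct.map (WithConv.linearEquiv R (H →ₗ[R] R)).toLinearMap
          (WithConv.linearEquiv R (H →ₗ[R] R)).toLinearMap)
    (fun f g f' g' => by
      have hmul := algHom_comp_convMul_distrib (Algebra.TensorProduct.lid R R).toAlgHom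
        (.toConv (TensorProduct.map f.ofConv f'.ofConv))
        (.toConv (TensorProduct.map g.ofConv g'.ofConv))
      rw [TensorProduct.map_convMul_map] at hmul
      exact WithConv.ext hmul)
    (by ext x y; simp [LinearMap.convOne_def, mul_comm])

@[simp] lemma dualDistribHom_tmul_apply_tmul (f g : WithConv (H →ₗ[R] R)) (x y : H) :
    dualDistribHom R H (f ⊗ₜ g) (x ⊗ₜ y) = f x * g y :=
  rfl

/-- A Hopf pairing of two bialgebras, as a linear map from the first to the dual of the second. -/
structure IsHopfPairing (B : U →ₗ[R] Module.Dual R H) : Prop where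
  mul_apply : ∀ u v x, B (u * v) x = TensorProduct.dualDistrib R H H (B u ⊗ₜ B v) (comul (R := R) x)
  apply_mul : ∀ u x y,
    B u (x * y) = TensorProduct.dualDistrib R U U (B.flip x ⊗ₜ B.flip y) (comul (R := R) u)
  one_apply : ∀ x, B 1 x = counit (R := R) x
  apply_one : ∀ u, B u 1 = counit (R := R) u

/-- The bilinear form underlying an algebra homomorphism into the convolution algebra `H*`. -/
def pairingOfHom {U : Type*} [Ring U] [Algebra R U] (Φ : U →ₐ[R] WithConv (H →ₗ[R] R)) :
    U →ₗ[R] Module.Dual R H :=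
  (WithConv.linearEquiv R (H →ₗ[R] R)).toLinearMap ∘ₗ Φ.toLinearMap

@[simp] lemma pairingOfHom_apply {U : Type*} [Ring U] [Algebra R U]
    (Φ : U →ₐ[R] WithConv (H →ₗ[R] R)) (u : U) (x : H) : pairingOfHom Φ u x = Φ u x :=
  rfl

theorem isHopfPairing_pairingOfHom {Φ : U →ₐ[R] WithConv (H →ₗ[R] R)}
    (hmul : (compMulHom R H).comp Φ =
      ((dualDistribHom R H).comp (Algebra.TensorProduct.map Φ Φ)).comp (comulAlgHom R U))
    (hone : (evalOneHom R H).comp Φ = counitAlgHom R U) : IsHopfPairing (pairingOfHom Φ) where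
  mul_apply u v x := by
    rw [pairingOfHom_apply, map_mul, convMul_apply]
    generalize comul (R := R) x = X
    induction X using TensorProduct.induction_on with
    | zero => simp
    | add X Y hX hY => simp only [map_add, hX, hY]
    | tmul x y => simp
  apply_mul u x y := by
    rw [pairingOfHom_apply, ← compMulHom_apply_tmul, ← AlgHom.comp_apply, hmul, AlgHom.comp_apply,
      AlgHom.comp_apply, comulAlgHom_apply]
    generalize comul (R := R) u = T
    induction T using TensorProduct.induction_on with
    | zero => simp
    | add S T hS hT => simp only [map_add, ← hS, ← hT]; rfl
    | tmul u v => simp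
  one_apply x := by simp [LinearMap.convOne_def]
  apply_one := DFunLike.congr_fun hone

namespace IsHopfPairing

variable {B : U →ₗ[R] Module.Dual R H}

/-- The algebra homomorphism into the convolution algebra underlying a Hopf pairing. -/
def toAlgHom (hB : IsHopfPairing B) : U →ₐ[R] WithConv (H →ₗ[R] R) :=
  AlgHom.ofLinearMap ((WithConv.linearEquiv R (H →ₗ[R] R)).symm.toLinearMap ∘ₗ B)
    (by ext x; simp [hB.one_apply, LinearMap.convOne_def])
    (fun u v => by
      ext x
      simp only [LinearMap.comp_apply, convMul_apply]
      refine (hB.mul_apply u v x).trans ?_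
      generalize comul (R := R) x = X
      induction X using TensorProduct.induction_on with
      | zero => simp
      | add X Y hX hY => simp only [map_add, hX, hY]
      | tmul x y => simp)

/-- The character of `H` defined by a group-like element of `U`. -/
def character (hB : IsHopfPairing B) {k : U} (hk : IsGroupLikeElem R k) : H →ₐ[R] R :=
  AlgHom.ofLinearMap (B k) (by rw [hB.apply_one, hk.counit_eq_one])
    (fun x y => by simp [hB.apply_mul, hk.comul_eq_tmul_self])

@[simp] lemma character_apply (hB : IsHopfPairing B) {k : U} (hk : IsGroupLikeElem R k) (x : H) :
    hB.character hk x = B k x :=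
  rfl

lemma isSkewDerivation (hB : IsHopfPairing B) {l k u : U} (hl : IsGroupLikeElem R l)
    (hk : IsGroupLikeElem R k) (hu : comul (R := R) u = u ⊗ₜ k + l ⊗ₜ u) :
    IsSkewDerivation (hB.character hl) (hB.character hk) (B u) where
  map_mul x y := by simp [hB.apply_mul, hu]

end IsHopfPairing

end HopfPairing

section Coproducts

open Coalgebra Bialgebra

variable {p : ℕ}

/-- Coproduct and counit of `A`, given by their values on the generators. -/
class ACoproduct (p : ℕ) where
  comul : A p →ₐ[ℂ] A p ⊗[ℂ] A p
  counit : A p →ₐ[ℂ] ℂ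
  comul_ηp : comul (ηp p) = ηp p ⊗ₜ 1 + dl p ⊗ₜ ηp p
  comul_ηm : comul (ηm p) = ηm p ⊗ₜ 1 + (dl p ^ (p - 1)) ⊗ₜ ηm p
  comul_dl : comul (dl p) = dl p ⊗ₜ dl p
  counit_ηp : counit (ηp p) = 0
  counit_ηm : counit (ηm p) = 0
  counit_dl : counit (dl p) = 1

instance [ACoproduct p] : Bialgebra ℂ (A p) :=
  Bialgebra.ofAlgHom ACoproduct.comul ACoproduct.counit
    (by apply A_algHom_ext <;>
          simp [ACoproduct.comul_ηp, ACoproduct.comul_ηm, ACoproduct.comul_dl,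
            TensorProduct.add_tmul, TensorProduct.tmul_add, add_assoc,
            Algebra.TensorProduct.one_def])
    (by apply A_algHom_ext <;>
          simp [ACoproduct.comul_ηp, ACoproduct.comul_ηm, ACoproduct.comul_dl,
            ACoproduct.counit_ηp, ACoproduct.counit_ηm, ACoproduct.counit_dl])
    (by apply A_algHom_ext <;>
          simp [ACoproduct.comul_ηp, ACoproduct.comul_ηm, ACoproduct.comul_dl,
            ACoproduct.counit_ηp, ACoproduct.counit_ηm, ACoproduct.counit_dl])

section

variable [ACoproduct p]

@[simp] lemma comul_ηp : comul (R := ℂ) (ηp p) = ηp p ⊗ₜ 1 + dl p ⊗ₜ ηp p :=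
  ACoproduct.comul_ηp

@[simp] lemma comul_ηm : comul (R := ℂ) (ηm p) = ηm p ⊗ₜ 1 + (dl p ^ (p - 1)) ⊗ₜ ηm p :=
  ACoproduct.comul_ηm

@[simp] lemma comul_dl : comul (R := ℂ) (dl p) = dl p ⊗ₜ dl p :=
  ACoproduct.comul_dl

@[simp] lemma counit_ηp : counit (R := ℂ) (ηp p) = 0 :=
  ACoproduct.counit_ηp

@[simp] lemma counit_ηm : counit (R := ℂ) (ηm p) = 0 :=
  ACoproduct.counit_ηm

@[simp] lemma counit_dl : counit (R := ℂ) (dl p) = 1 :=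
  ACoproduct.counit_dl

end

/-- Coproduct and counit of `U_f`, given by their values on the generators. -/
class UfCoproduct (p : ℕ) where
  comul : Uf p →ₐ[ℂ] Uf p ⊗[ℂ] Uf p
  counit : Uf p →ₐ[ℂ] ℂ
  comul_up : comul (up p) = up p ⊗ₜ uk p + ukinv p ⊗ₜ up p
  comul_um : comul (um p) = um p ⊗ₜ uk p + ukinv p ⊗ₜ um p
  comul_uk : comul (uk p) = uk p ⊗ₜ uk p
  comul_ukinv : comul (ukinv p) = ukinv p ⊗ₜ ukinv p
  counit_up : counit (up p) = 0
  counit_um : counit (um p) = 0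
  counit_uk : counit (uk p) = 1
  counit_ukinv : counit (ukinv p) = 1

instance [NeZero p] [UfCoproduct p] : Bialgebra ℂ (Uf p) :=
  Bialgebra.ofAlgHom UfCoproduct.comul UfCoproduct.counit
    (by apply Uf_algHom_ext <;>
          simp [UfCoproduct.comul_up, UfCoproduct.comul_um, UfCoproduct.comul_uk,
            UfCoproduct.comul_ukinv, TensorProduct.add_tmul, TensorProduct.tmul_add, add_assoc])
    (by apply Uf_algHom_ext <;>
          simp [UfCoproduct.comul_up, UfCoproduct.comul_um, UfCoproduct.comul_uk,
            UfCoproduct.counit_up, UfCoproduct.counit_um, UfCoproduct.counit_uk,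
            UfCoproduct.counit_ukinv])
    (by apply Uf_algHom_ext <;>
          simp [UfCoproduct.comul_up, UfCoproduct.comul_um, UfCoproduct.comul_uk,
            UfCoproduct.counit_up, UfCoproduct.counit_um, UfCoproduct.counit_uk])

section

variable [NeZero p] [UfCoproduct p]

@[simp] lemma comul_up : comul (R := ℂ) (up p) = up p ⊗ₜ uk p + ukinv p ⊗ₜ up p :=
  UfCoproduct.comul_up

@[simp] lemma comul_um : comul (R := ℂ) (um p) = um p ⊗ₜ uk p + ukinv p ⊗ₜ um p :=
  UfCoproduct.comul_um

@[simp] lemma counit_up : counit (R := ℂ) (up p) = 0 :=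
  UfCoproduct.counit_up

@[simp] lemma counit_um : counit (R := ℂ) (um p) = 0 :=
  UfCoproduct.counit_um

lemma isGroupLikeElem_uk : IsGroupLikeElem ℂ (uk p) :=
  ⟨UfCoproduct.counit_uk, UfCoproduct.comul_uk⟩

lemma isGroupLikeElem_ukinv : IsGroupLikeElem ℂ (ukinv p) :=
  ⟨UfCoproduct.counit_ukinv, UfCoproduct.comul_ukinv⟩

end

end Coproducts

section DualGenerators

variable (p : ℕ)

/-- The character of `A` killing `η₊, η₋` and sending `δ` to a `p`-th root of unity `r`. -/
def dlCharacter [NeZero p] (r : ℂ) (hr : r ^ p = 1) : A p →ₐ[ℂ] ℂ :=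
  liftA 0 0 r (by simp) (by simp) (by simp) hr (zero_pow (NeZero.ne p)) (zero_pow (NeZero.ne p))

section

variable [NeZero p] (r : ℂ) (hr : r ^ p = 1)

@[simp] lemma dlCharacter_ηp : dlCharacter p r hr (ηp p) = 0 := by
  simp [dlCharacter]

@[simp] lemma dlCharacter_ηm : dlCharacter p r hr (ηm p) = 0 := by
  simp [dlCharacter]

@[simp] lemma dlCharacter_dl : dlCharacter p r hr (dl p) = r := by
  simp [dlCharacter]

/-- The functional `⟨κ, ·⟩`. -/
abbrev kCharacter : A p →ₐ[ℂ] ℂ :=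
  dlCharacter p (q p) (q_pow_self p)

/-- The functional `⟨κ⁻¹, ·⟩`. -/
abbrev kInvCharacter : A p →ₐ[ℂ] ℂ :=
  dlCharacter p (q p)⁻¹ (by rw [inv_pow, q_pow_self, inv_one])

end

variable [Fact (1 < p)] (s t : ℂ)

lemma upperTriangular_mul_diagonal {K : Type*} [Field K] {r : K} (hr : r ≠ 0) (s : K) :
    !![0, s; 0, 0] * !![r⁻¹, 0; 0, r] = r ^ 2 • (!![r⁻¹, 0; 0, r] * !![0, s; 0, 0]) := by
  ext i j
  fin_cases i <;> fin_cases j <;> simp [sq, mul_assoc, mul_comm s, hr]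

lemma strictUpperTriangular_pow_eq_zero {R : Type*} [Semiring R] {n : ℕ} (hn : 1 < n) (s : R) :
    !![0, s; 0, 0] ^ n = 0 :=
  pow_eq_zero_of_le hn (by ext i j; fin_cases i <;> fin_cases j <;> simp [sq])

/-- The representation of `A` by upper triangular matrices whose diagonal entries are the characters
`⟨κ⁻¹, ·⟩` and `⟨κ, ·⟩`; its off-diagonal entry is then a skew derivation. -/
def triangularRep : A p →ₐ[ℂ] Matrix (Fin 2) (Fin 2) ℂ :=
  liftA !![0, s; 0, 0] !![0, t; 0, 0] !![(q p)⁻¹, 0; 0, q p] (by simp)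
    (upperTriangular_mul_diagonal (q_ne_zero p) s) (upperTriangular_mul_diagonal (q_ne_zero p) t)
    (by
      have h := Matrix.diagonal_pow ![(q p)⁻¹, q p] p
      simpa [Matrix.diagonal_fin_two, q_pow_self, ← Matrix.one_fin_two] using h)
    (strictUpperTriangular_pow_eq_zero Fact.out s) (strictUpperTriangular_pow_eq_zero Fact.out t)

/-- The skew derivation of `A` with values `s, t, 0` on `η₊, η₋, δ`. -/
def skewFunctional : A p →ₗ[ℂ] ℂ :=
  Matrix.entryLinearMap ℂ ℂ 0 1 ∘ₗ (triangularRep p s t).toLinearMap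

@[simp] lemma skewFunctional_ηp : skewFunctional p s t (ηp p) = s := by
  simp [skewFunctional, triangularRep]

@[simp] lemma skewFunctional_ηm : skewFunctional p s t (ηm p) = t := by
  simp [skewFunctional, triangularRep]

@[simp] lemma skewFunctional_dl : skewFunctional p s t (dl p) = 0 := by
  simp [skewFunctional, triangularRep]

lemma triangularRep_apply (x : A p) : triangularRep p s t x =
    !![kInvCharacter p x, skewFunctional p s t x; 0, kCharacter p x] := by
  induction (adjoin_dl_ηp_ηm p ▸ Algebra.mem_top :
    x ∈ Algebra.adjoin ℂ {dl p, ηp p, ηm p}) using Algebra.adjoin_induction with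
  | mem x hx =>
    rcases hx with rfl | rfl | rfl <;> ext i j <;> fin_cases i <;> fin_cases j <;>
      simp [triangularRep]
  | algebraMap r =>
    ext i j
    fin_cases i <;> fin_cases j <;> simp [skewFunctional, Matrix.algebraMap_matrix_apply]
  | add x y _ _ hx hy => rw [map_add, hx, hy]; simp
  | mul x y _ _ hx hy =>
    have h : skewFunctional p s t (x * y) =
        (triangularRep p s t x * triangularRep p s t y) 0 1 := by
      simp [skewFunctional]
    rw [map_mul, h, hx, hy]
    simp

lemma isSkewDerivation_skewFunctional :
    IsSkewDerivation (kInvCharacter p) (kCharacter p) (skewFunctional p s t) where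
  map_mul x y := by
    have h := congrFun₂ (map_mul (triangularRep p s t) x y) 0 1
    simp only [triangularRep_apply] at h
    simpa [add_comm] using h

end DualGenerators

section Monomials

variable (p : ℕ)

/-- The ordered monomial `δ^a η₊^b η₋^c` of `A`. -/
def monoA (a b c : ℕ) : A p :=
  dl p ^ a * (ηp p ^ b * ηm p ^ c)

/-- The ordered monomial `κ^a p₊^b p₋^c` of `U_f`. -/
def monoUf (a b c : ℕ) : Uf p :=
  uk p ^ a * (up p ^ b * um p ^ c)

lemma span_monoA [NeZero p] : Submodule.span ℂ
    (Set.range fun i : Fin p × Fin p × Fin p => monoA p i.1 i.2.1 i.2.2) = ⊤ :=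
  span_pow_mul_pow_mul_pow_eq_top (NeZero.ne p) (ηm_mul_ηp p) (ηp_mul_dl p) (ηm_mul_dl p)
    (dl_pow_self p) (ηp_pow_self p) (ηm_pow_self p) (adjoin_dl_ηp_ηm p)

lemma span_monoUf [NeZero p] : Submodule.span ℂ
    (Set.range fun i : Fin p × Fin p × Fin p => monoUf p i.1 i.2.1 i.2.2) = ⊤ :=
  span_pow_mul_pow_mul_pow_eq_top (NeZero.ne p) (by rw [up_mul_um, one_smul]) (up_mul_uk p)
    (um_mul_uk p) (uk_pow_self p) (up_pow_self p) (um_pow_self p) (adjoin_uk_up_um p)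

variable {p}

theorem functional_ext_monoA [NeZero p] {f g : WithConv (A p →ₗ[ℂ] ℂ)}
    (h : ∀ a b c, b < p → c < p → f (monoA p a b c) = g (monoA p a b c)) : f = g :=
  WithConv.ext <| LinearMap.ext_on_range (span_monoA p) fun i => h _ _ _ i.2.1.2 i.2.2.2

end Monomials

section Translation

variable {p : ℕ} [ACoproduct p]

section

variable [NeZero p] (r : ℂ) (hr : r ^ p = 1)

@[simp] lemma rightTranslateHom_dlCharacter_ηp :
    rightTranslateHom (dlCharacter p r hr) (ηp p) = ηp p := by
  simp [rightTranslateHom]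

@[simp] lemma rightTranslateHom_dlCharacter_ηm :
    rightTranslateHom (dlCharacter p r hr) (ηm p) = ηm p := by
  simp [rightTranslateHom]

@[simp] lemma rightTranslateHom_dlCharacter_dl :
    rightTranslateHom (dlCharacter p r hr) (dl p) = r • dl p := by
  simp [rightTranslateHom]

lemma rightTranslateHom_dlCharacter_monoA (a b c : ℕ) :
    rightTranslateHom (dlCharacter p r hr) (monoA p a b c) = r ^ a • monoA p a b c := by
  simp [monoA, smul_pow]

end

variable [Fact (1 < p)] (s t : ℂ)

@[simp] lemma rightTranslate_skewFunctional_ηp :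
    rightTranslate (skewFunctional p s t) (ηp p) = s • dl p := by
  simp [rightTranslate, (isSkewDerivation_skewFunctional p s t).map_one]

@[simp] lemma rightTranslate_skewFunctional_ηm :
    rightTranslate (skewFunctional p s t) (ηm p) = t • dl p ^ (p - 1) := by
  simp [rightTranslate, (isSkewDerivation_skewFunctional p s t).map_one]

@[simp] lemma rightTranslate_skewFunctional_dl :
    rightTranslate (skewFunctional p s t) (dl p) = 0 := by
  simp [rightTranslate]

lemma rightTranslate_skewFunctional_ηp_pow (n : ℕ) :
    rightTranslate (skewFunctional p s t) (ηp p ^ n) =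
      (s * ∑ j ∈ Finset.range n, (q p ^ 2) ^ j) • (dl p * ηp p ^ (n - 1)) := by
  rw [(isSkewDerivation_skewFunctional p s t).rightTranslate_pow (by simp) (by simp)
    (rightTranslate_skewFunctional_ηp s t)
    (by rw [mul_smul_comm, ηp_mul_dl, smul_comm, smul_mul_assoc]), smul_mul_assoc, smul_smul,
    mul_comm]

lemma rightTranslate_skewFunctional_ηm_pow (n : ℕ) :
    rightTranslate (skewFunctional p s t) (ηm p ^ n) =
      (t * ∑ j ∈ Finset.range n, ((q p)⁻¹ ^ 2) ^ j) • (dl p ^ (p - 1) * ηm p ^ (n - 1)) := by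
  rw [(isSkewDerivation_skewFunctional p s t).rightTranslate_pow (by simp) (by simp)
    (rightTranslate_skewFunctional_ηm s t)
    (by rw [mul_smul_comm, mul_pow_of_mul_eq_smul (ηm_mul_dl p), q_sq_pow_pred, smul_comm,
      smul_mul_assoc]), smul_mul_assoc, smul_smul, mul_comm]

lemma rightTranslate_skewFunctional_dl_pow (n : ℕ) :
    rightTranslate (skewFunctional p s t) (dl p ^ n) = 0 := by
  induction n with
  | zero => simpa using (isSkewDerivation_skewFunctional p s t).rightTranslate_one
  | succ n ih => simp [pow_succ, (isSkewDerivation_skewFunctional p s t).rightTranslate_mul, ih]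

theorem rightTranslate_skewFunctional_monoA (a b c : ℕ) :
    rightTranslate (skewFunctional p s t) (monoA p a b c) =
      ((q p)⁻¹ ^ a * s * ∑ j ∈ Finset.range b, (q p ^ 2) ^ j) • monoA p (a + 1) (b - 1) c +
      ((q p)⁻¹ ^ a * t * ((q p)⁻¹ ^ 2) ^ b * ∑ j ∈ Finset.range c, ((q p)⁻¹ ^ 2) ^ j) •
        monoA p (a + (p - 1)) b (c - 1) := by
  have hcomm : ηp p ^ b * dl p ^ (p - 1) = ((q p)⁻¹ ^ 2) ^ b • (dl p ^ (p - 1) * ηp p ^ b) := by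
    rw [pow_mul_of_mul_eq_smul
      (show ηp p * dl p ^ (p - 1) = (q p)⁻¹ ^ 2 • (dl p ^ (p - 1) * ηp p) by
        rw [mul_pow_of_mul_eq_smul (ηp_mul_dl p), q_sq_pow_pred])]
  have hη : rightTranslate (skewFunctional p s t) (ηp p ^ b * ηm p ^ c) =
      (s * ∑ j ∈ Finset.range b, (q p ^ 2) ^ j) • (dl p * (ηp p ^ (b - 1) * ηm p ^ c)) +
      (t * ((q p)⁻¹ ^ 2) ^ b * ∑ j ∈ Finset.range c, ((q p)⁻¹ ^ 2) ^ j) •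
        (dl p ^ (p - 1) * (ηp p ^ b * ηm p ^ (c - 1))) := by
    rw [(isSkewDerivation_skewFunctional p s t).rightTranslate_mul,
      rightTranslate_skewFunctional_ηp_pow, rightTranslate_skewFunctional_ηm_pow, map_pow, map_pow,
      rightTranslateHom_dlCharacter_ηp, rightTranslateHom_dlCharacter_ηm, mul_smul_comm,
      ← mul_assoc (ηp p ^ b), hcomm, smul_mul_assoc, smul_mul_assoc, smul_smul,
      mul_assoc (dl p), mul_assoc (dl p ^ _), mul_right_comm t]
  rw [monoA, (isSkewDerivation_skewFunctional p s t).rightTranslate_mul,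
    rightTranslate_skewFunctional_dl_pow, zero_mul, zero_add, map_pow,
    rightTranslateHom_dlCharacter_dl, smul_pow, hη, smul_mul_assoc, mul_add, smul_add,
    mul_smul_comm, mul_smul_comm, smul_smul, smul_smul, ← mul_assoc (dl p ^ a),
    ← mul_assoc (dl p ^ a), ← pow_succ, ← pow_add, monoA, monoA]
  simp only [mul_assoc]

end Translation

section DualAlgebra

section

variable {p : ℕ}

/-- A functional on `A` supported on the monomials `δ^a η₊^j η₋^k`, `a ∈ ℕ`. -/
def HasBidegree (f : WithConv (A p →ₗ[ℂ] ℂ)) (j k : ℕ) : Prop :=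
  ∀ a b c, (b, c) ≠ (j, k) → f (monoA p a b c) = 0

variable [ACoproduct p]

lemma one_apply_monoA (a b c : ℕ) :
    (1 : WithConv (A p →ₗ[ℂ] ℂ)) (monoA p a b c) = 0 ^ b * 0 ^ c := by
  simp [LinearMap.convOne_def, monoA]

lemma hasBidegree_one : HasBidegree (1 : WithConv (A p →ₗ[ℂ] ℂ)) 0 0 := by
  intro a b c h
  rw [one_apply_monoA, mul_eq_zero, zero_pow_eq_zero, zero_pow_eq_zero]
  rw [Ne, Prod.mk_inj] at h
  omega

end

variable (p : ℕ) [Fact (1 < p)]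

/-- `κ` as an element of the convolution algebra `A*`. -/
def dualK : WithConv (A p →ₗ[ℂ] ℂ) :=
  .toConv (kCharacter p).toLinearMap

/-- `κ⁻¹` as an element of the convolution algebra `A*`. -/
def dualKInv : WithConv (A p →ₗ[ℂ] ℂ) :=
  .toConv (kInvCharacter p).toLinearMap

/-- `p₊` as an element of the convolution algebra `A*`. -/
def dualP : WithConv (A p →ₗ[ℂ] ℂ) :=
  .toConv (skewFunctional p (Complex.I * qh p) 0)

/-- `p₋` as an element of the convolution algebra `A*`. -/
def dualM : WithConv (A p →ₗ[ℂ] ℂ) :=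
  .toConv (skewFunctional p 0 (Complex.I * (qh p)⁻¹))

variable {p} [ACoproduct p] (f : WithConv (A p →ₗ[ℂ] ℂ)) (a b c n : ℕ)

lemma convMul_dualK_monoA : (f * dualK p) (monoA p a b c) = q p ^ a * f (monoA p a b c) := by
  rw [convMul_apply_eq_rightTranslate, dualK, WithConv.ofConv_toConv, rightTranslate_toLinearMap,
    AlgHom.toLinearMap_apply, rightTranslateHom_dlCharacter_monoA, map_smul, smul_eq_mul]

lemma convMul_dualKInv_monoA :
    (f * dualKInv p) (monoA p a b c) = (q p)⁻¹ ^ a * f (monoA p a b c) := by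
  rw [convMul_apply_eq_rightTranslate, dualKInv, WithConv.ofConv_toConv, rightTranslate_toLinearMap,
    AlgHom.toLinearMap_apply, rightTranslateHom_dlCharacter_monoA, map_smul, smul_eq_mul]

lemma convMul_dualP_monoA : (f * dualP p) (monoA p a b c) =
    (q p)⁻¹ ^ a * (Complex.I * qh p) * (∑ j ∈ Finset.range b, (q p ^ 2) ^ j) *
      f (monoA p (a + 1) (b - 1) c) := by
  rw [convMul_apply_eq_rightTranslate, dualP, WithConv.ofConv_toConv,
    rightTranslate_skewFunctional_monoA]
  simp

lemma convMul_dualM_monoA : (f * dualM p) (monoA p a b c) =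
    (q p)⁻¹ ^ a * (Complex.I * (qh p)⁻¹) * ((q p)⁻¹ ^ 2) ^ b *
      (∑ j ∈ Finset.range c, ((q p)⁻¹ ^ 2) ^ j) * f (monoA p (a + (p - 1)) b (c - 1)) := by
  rw [convMul_apply_eq_rightTranslate, dualM, WithConv.ofConv_toConv,
    rightTranslate_skewFunctional_monoA]
  simp

lemma convMul_dualK_pow_monoA :
    (f * dualK p ^ n) (monoA p a b c) = (q p ^ a) ^ n * f (monoA p a b c) := by
  induction n with
  | zero => simp
  | succ n ih => rw [pow_succ, ← mul_assoc, convMul_dualK_monoA, ih, pow_succ', mul_assoc]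

variable {f} {j k : ℕ}

namespace HasBidegree

lemma mul_dualK_pow (hf : HasBidegree f j k) : HasBidegree (f * dualK p ^ n) j k :=
  fun a b c h => by rw [convMul_dualK_pow_monoA, hf a b c h, mul_zero]

lemma mul_dualP (hf : HasBidegree f j k) : HasBidegree (f * dualP p) (j + 1) k := by
  rintro a (_ | b) c h
  · rw [convMul_dualP_monoA, Finset.sum_range_zero, mul_zero, zero_mul]
  · rw [convMul_dualP_monoA, Nat.add_sub_cancel, hf _ _ _ (by grind), mul_zero]

lemma mul_dualM (hf : HasBidegree f j k) : HasBidegree (f * dualM p) j (k + 1) := by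
  rintro a b (_ | c) h
  · rw [convMul_dualM_monoA, Finset.sum_range_zero, mul_zero, zero_mul]
  · rw [convMul_dualM_monoA, Nat.add_sub_cancel, hf _ _ _ (by grind), mul_zero]

lemma mul_dualP_pow (hf : HasBidegree f j k) : HasBidegree (f * dualP p ^ n) (j + n) k := by
  induction n with
  | zero => simpa using hf
  | succ n ih => simpa only [pow_succ, ← mul_assoc, ← add_assoc] using ih.mul_dualP

lemma mul_dualM_pow (hf : HasBidegree f j k) : HasBidegree (f * dualM p ^ n) j (k + n) := by
  induction n with
  | zero => simpa using hf
  | succ n ih => simpa only [pow_succ, ← mul_assoc, ← add_assoc] using ih.mul_dualM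

end HasBidegree

variable (f) in
lemma convMul_dualP_pow_monoA (h : q p ^ 2 ≠ 1) : (f * dualP p ^ n) (monoA p a n c) =
    (Complex.I * qh p) ^ n * (q p)⁻¹ ^ (n * a) * qfact p n * f (monoA p (a + n) 0 c) := by
  induction n generalizing a with
  | zero => simp [qfact]
  | succ n ih =>
    rw [pow_succ, ← mul_assoc, convMul_dualP_monoA, Nat.add_sub_cancel, ih, geom_sum_q_sq h,
      qfact_succ, add_right_comm a 1 n, add_assoc a n 1, mul_add_one n a, add_one_mul n a, pow_add,
      pow_add, inv_pow _ n, pow_succ]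
    field_simp [q_ne_zero p]
    ring

variable (f) in
lemma convMul_dualM_pow_monoA (h : q p ^ 2 ≠ 1) : (f * dualM p ^ n) (monoA p a b n) =
    (Complex.I * (qh p)⁻¹) ^ n * (q p)⁻¹ ^ (n * a) * ((q p)⁻¹ ^ 2) ^ (b * n) * qfact p n *
      f (monoA p (a + n * (p - 1)) b 0) := by
  induction n generalizing a with
  | zero => simp [qfact]
  | succ n ih =>
    have hq : (q p)⁻¹ ^ (n * (a + (p - 1))) * (q p)⁻¹ ^ n = (q p)⁻¹ ^ (n * a) := by
      rw [← pow_add, ← mul_add_one, add_assoc, Nat.sub_add_cancel NeZero.one_le, mul_add, pow_add,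
        mul_comm n p, pow_mul _ p, inv_pow _ p, q_pow_self, inv_one, one_pow, mul_one]
    rw [pow_succ, ← mul_assoc, convMul_dualM_monoA, Nat.add_sub_cancel, ih, geom_sum_q_inv_sq h,
      qfact_succ, show a + (p - 1) + n * (p - 1) = a + (n + 1) * (p - 1) by ring]
    linear_combination (Complex.I * (qh p)⁻¹) ^ (n + 1) * (q p)⁻¹ ^ a *
      ((q p)⁻¹ ^ 2) ^ (b * (n + 1)) * qfact p n * qnum p (n + 1) *
      f (monoA p (a + (n + 1) * (p - 1)) b 0) * hq

end DualAlgebra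

section Pairing

variable {p : ℕ} [Fact (1 < p)] [ACoproduct p]

lemma dualP_mul_dualM : dualP p * dualM p = dualM p * dualP p := by
  refine functional_ext_monoA fun a b c _ _ => ?_
  have hq : (q p)⁻¹ ^ (p - 1) = q p := by rw [inv_pow, q_pow_pred, inv_inv]
  rw [← one_mul (dualP p * dualM p), ← one_mul (dualM p * dualP p), ← mul_assoc, ← mul_assoc,
    convMul_dualM_monoA, convMul_dualP_monoA, convMul_dualP_monoA, convMul_dualM_monoA,
    add_right_comm a 1]
  cases b with
  | zero => simp
  | succ b =>
    rw [Nat.add_sub_cancel, pow_add _ a (p - 1), hq, pow_succ _ a, pow_succ _ b]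
    field_simp [q_ne_zero p]

lemma dualP_mul_dualK : dualP p * dualK p = (q p)⁻¹ • (dualK p * dualP p) := by
  refine functional_ext_monoA fun a b c _ _ => ?_
  rw [← one_mul (dualP p * dualK p), ← one_mul (dualK p * dualP p), ← mul_assoc, ← mul_assoc,
    WithConv.ofConv_smul, LinearMap.smul_apply, smul_eq_mul, convMul_dualK_monoA,
    convMul_dualP_monoA, convMul_dualP_monoA, convMul_dualK_monoA,
    pow_succ _ a]
  field_simp [q_ne_zero p]

lemma dualM_mul_dualK : dualM p * dualK p = q p • (dualK p * dualM p) := by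
  refine functional_ext_monoA fun a b c _ _ => ?_
  rw [← one_mul (dualM p * dualK p), ← one_mul (dualK p * dualM p), ← mul_assoc, ← mul_assoc,
    WithConv.ofConv_smul, LinearMap.smul_apply, smul_eq_mul, convMul_dualK_monoA,
    convMul_dualM_monoA, convMul_dualM_monoA, convMul_dualK_monoA, pow_add, q_pow_pred]
  field_simp [q_ne_zero p]

lemma dualK_mul_dualKInv : dualK p * dualKInv p = 1 := by
  refine functional_ext_monoA fun a b c _ _ => ?_
  rw [convMul_dualKInv_monoA, ← one_mul (dualK p), convMul_dualK_monoA, ← mul_assoc, ← mul_pow,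
    inv_mul_cancel₀ (q_ne_zero p), one_pow, one_mul]

lemma dualKInv_mul_dualK : dualKInv p * dualK p = 1 := by
  refine functional_ext_monoA fun a b c _ _ => ?_
  rw [convMul_dualK_monoA, ← one_mul (dualKInv p), convMul_dualKInv_monoA, ← mul_assoc, ← mul_pow,
    mul_inv_cancel₀ (q_ne_zero p), one_pow, one_mul]

lemma dualK_pow_self : dualK p ^ p = 1 := by
  refine functional_ext_monoA fun a b c _ _ => ?_
  rw [← one_mul (dualK p ^ p), convMul_dualK_pow_monoA, pow_right_comm, q_pow_self, one_pow,
    one_mul]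

lemma HasBidegree.eq_zero {f : WithConv (A p →ₗ[ℂ] ℂ)} {j k : ℕ} (hf : HasBidegree f j k)
    (hjk : p ≤ j ∨ p ≤ k) : f = 0 :=
  functional_ext_monoA fun a b c hb hc => (hf a b c (by grind)).trans rfl

lemma dualP_pow_self : dualP p ^ p = 0 := by
  simpa using (hasBidegree_one.mul_dualP_pow p).eq_zero (.inl (Nat.le_add_left p 0))

lemma dualM_pow_self : dualM p ^ p = 0 := by
  simpa using (hasBidegree_one.mul_dualM_pow p).eq_zero (.inr (Nat.le_add_left p 0))

variable (p) in
/-- The algebra homomorphism `U_f → A*` underlying the pairing. -/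
def pairingHom : Uf p →ₐ[ℂ] WithConv (A p →ₗ[ℂ] ℂ) :=
  liftUf (dualP p) (dualM p) (dualK p) (dualKInv p) dualP_mul_dualM dualP_mul_dualK dualM_mul_dualK
    dualK_mul_dualKInv dualKInv_mul_dualK dualK_pow_self dualP_pow_self dualM_pow_self

@[simp] lemma pairingHom_up : pairingHom p (up p) = dualP p :=
  liftUf_up ..

@[simp] lemma pairingHom_um : pairingHom p (um p) = dualM p :=
  liftUf_um ..

@[simp] lemma pairingHom_uk : pairingHom p (uk p) = dualK p :=
  liftUf_uk ..

@[simp] lemma pairingHom_ukinv : pairingHom p (ukinv p) = dualKInv p :=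
  liftUf_ukinv ..

variable (p) in
/-- The pairing `⟨·, ·⟩` of `U_f` and `A`. -/
def pairing : Uf p →ₗ[ℂ] Module.Dual ℂ (A p) :=
  pairingOfHom (pairingHom p)

variable [UfCoproduct p]

lemma isHopfPairing_pairing : IsHopfPairing (pairing p) := by
  refine isHopfPairing_pairingOfHom (Uf_algHom_ext ?_ ?_ ?_) (Uf_algHom_ext ?_ ?_ ?_)
  · ext x y
    simp [dualP, dualK, dualKInv, (isSkewDerivation_skewFunctional p _ _).map_mul]
  · ext x y
    simp [dualM, dualK, dualKInv, (isSkewDerivation_skewFunctional p _ _).map_mul]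
  · ext x y
    simp [dualK, (isGroupLikeElem_uk (p := p)).comul_eq_tmul_self]
  · simp [dualP, (isSkewDerivation_skewFunctional p _ _).map_one]
  · simp [dualM, (isSkewDerivation_skewFunctional p _ _).map_one]
  · simp [dualK, (isGroupLikeElem_uk (p := p)).counit_eq_one]

end Pairing

section Uniqueness

variable {p : ℕ} {B : Uf p →ₗ[ℂ] Module.Dual ℂ (A p)}

/-- The prescribed values of the pairing on the generators of `U_f` and `A`. -/
def HasGeneratorValues (B : Uf p →ₗ[ℂ] Module.Dual ℂ (A p)) : Prop :=
  B (uk p) (dl p) = q p ∧ B (ukinv p) (dl p) = (q p)⁻¹ ∧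
  B (uk p) (ηp p) = 0 ∧ B (uk p) (ηm p) = 0 ∧
  B (ukinv p) (ηp p) = 0 ∧ B (ukinv p) (ηm p) = 0 ∧
  B (up p) (ηp p) = Complex.I * qh p ∧ B (um p) (ηm p) = Complex.I * (qh p)⁻¹ ∧
  B (up p) (ηm p) = 0 ∧ B (um p) (ηp p) = 0 ∧
  B (up p) (dl p) = 0 ∧ B (um p) (dl p) = 0

variable [Fact (1 < p)] [ACoproduct p]

lemma hasGeneratorValues_pairing : HasGeneratorValues (pairing p) := by
  simp [HasGeneratorValues, pairing, dualK, dualKInv, dualP, dualM]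

variable [UfCoproduct p]

namespace IsHopfPairing

lemma character_uk (hB : IsHopfPairing B) (hv : HasGeneratorValues B) :
    hB.character isGroupLikeElem_uk = kCharacter p := by
  obtain ⟨hd, -, hp, hm, -⟩ := hv
  exact A_algHom_ext (by simp [hp]) (by simp [hm]) (by simp [hd])

lemma character_ukinv (hB : IsHopfPairing B) (hv : HasGeneratorValues B) :
    hB.character isGroupLikeElem_ukinv = kInvCharacter p := by
  obtain ⟨-, hd, -, -, hp, hm, -⟩ := hv
  exact A_algHom_ext (by simp [hp]) (by simp [hm]) (by simp [hd])

lemma apply_eq_skewFunctional (hB : IsHopfPairing B) (hv : HasGeneratorValues B) {u : Uf p}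
    (hu : Coalgebra.comul (R := ℂ) u = u ⊗ₜ uk p + ukinv p ⊗ₜ u) (hd : B u (dl p) = 0) :
    B u = skewFunctional p (B u (ηp p)) (B u (ηm p)) := by
  have hskew := hB.isSkewDerivation isGroupLikeElem_ukinv isGroupLikeElem_uk hu
  rw [hB.character_uk hv, hB.character_ukinv hv] at hskew
  refine hskew.ext_of_adjoin_eq_top (isSkewDerivation_skewFunctional p _ _) (adjoin_dl_ηp_ηm p) ?_
  rintro _ (rfl | rfl | rfl) <;> simp [hd]

theorem eq_pairing (hB : IsHopfPairing B) (hv : HasGeneratorValues B) : B = pairing p := by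
  have hk : B (uk p) = (kCharacter p).toLinearMap :=
    congrArg AlgHom.toLinearMap (hB.character_uk hv)
  have hup := hB.apply_eq_skewFunctional hv comul_up
  have hum := hB.apply_eq_skewFunctional hv comul_um
  obtain ⟨-, -, -, -, -, -, hpp, hmm, hpm, hmp, hpd, hmd⟩ := hv
  have hom_eq : hB.toAlgHom = pairingHom p :=
    Uf_algHom_ext
      (by rw [pairingHom_up, dualP, ← hpp, ← hpm, ← hup hpd]; rfl)
      (by rw [pairingHom_um, dualM, ← hmm, ← hmp, ← hum hmd]; rfl)
      (by rw [pairingHom_uk, dualK, ← hk]; rfl)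
  exact congrArg pairingOfHom hom_eq

end IsHopfPairing

end Uniqueness

section Values

/-- The value of `⟨p₊^b p₋^c, δ^a η₊^b η₋^c⟩`. -/
def gramCoeff (p a b c : ℕ) : ℂ :=
  (Complex.I * (qh p)⁻¹) ^ c * (q p)⁻¹ ^ (c * a) * ((q p)⁻¹ ^ 2) ^ (b * c) * qfact p c *
    ((Complex.I * qh p) ^ b * (q p)⁻¹ ^ (b * (a + c * (p - 1))) * qfact p b)

lemma gramCoeff_ne_zero {p : ℕ} (hp : Odd p) (a : ℕ) {b c : ℕ} (hb : b < p) (hc : c < p) :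
    gramCoeff p a b c ≠ 0 := by
  simp [gramCoeff, q_ne_zero, qh_ne_zero, qfact_ne_zero hp hb, qfact_ne_zero hp hc]

variable {p : ℕ} [Fact (1 < p)] [ACoproduct p]

lemma pairing_apply_monoUf (r b c : ℕ) (x : A p) :
    pairing p (monoUf p r b c) x = (1 * dualK p ^ r * dualP p ^ b * dualM p ^ c) x := by
  simp only [pairing, pairingOfHom_apply, monoUf, map_mul, map_pow, pairingHom_uk, pairingHom_up,
    pairingHom_um, one_mul, mul_assoc]

lemma pairing_monoUf_monoA_of_ne (r a : ℕ) {b c e f : ℕ} (h : (e, f) ≠ (b, c)) :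
    pairing p (monoUf p r b c) (monoA p a e f) = 0 := by
  rw [pairing_apply_monoUf]
  have hf := (((hasBidegree_one (p := p)).mul_dualK_pow r).mul_dualP_pow b).mul_dualM_pow c
  exact hf a e f (by rwa [zero_add, zero_add])

lemma pairing_monoUf_monoA_self (h : q p ^ 2 ≠ 1) (r a b c : ℕ) :
    pairing p (monoUf p r b c) (monoA p a b c) =
      gramCoeff p a b c * (q p ^ (a + c * (p - 1) + b)) ^ r := by
  rw [pairing_apply_monoUf, convMul_dualM_pow_monoA _ _ _ _ h, convMul_dualP_pow_monoA _ _ _ _ h,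
    convMul_dualK_pow_monoA, one_apply_monoA, gramCoeff]
  ring

lemma pairing_up_pow_ηp_pow (h : q p ^ 2 ≠ 1) (n m : ℕ) : pairing p (up p ^ n) (ηp p ^ m) =
    if n = m then Complex.I ^ n * qh p ^ n * qfact p n else 0 := by
  have hu : up p ^ n = monoUf p 0 n 0 := by simp [monoUf]
  have hη : ηp p ^ m = monoA p 0 m 0 := by simp [monoA]
  rw [hu, hη]
  split_ifs with hnm
  · subst hnm
    simp [pairing_monoUf_monoA_self h, gramCoeff, qfact, mul_pow]
  · exact pairing_monoUf_monoA_of_ne 0 0 (by grind)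

lemma pairing_um_pow_ηm_pow (h : q p ^ 2 ≠ 1) (n m : ℕ) : pairing p (um p ^ n) (ηm p ^ m) =
    if n = m then Complex.I ^ n * (qh p)⁻¹ ^ n * qfact p n else 0 := by
  have hu : um p ^ n = monoUf p 0 0 n := by simp [monoUf]
  have hη : ηm p ^ m = monoA p 0 0 m := by simp [monoA]
  rw [hu, hη]
  split_ifs with hnm
  · subst hnm
    simp [pairing_monoUf_monoA_self h, gramCoeff, qfact, mul_pow]
  · exact pairing_monoUf_monoA_of_ne 0 0 (by grind)

lemma pairing_uk_pow_dl_pow (n m : ℕ) : pairing p (uk p ^ n) (dl p ^ m) = q p ^ (n * m) := by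
  have hu : uk p ^ n = monoUf p n 0 0 := by simp [monoUf]
  have hδ : dl p ^ m = monoA p m 0 0 := by simp [monoA]
  rw [hu, hδ, pairing_apply_monoUf, pow_zero, pow_zero, mul_one, mul_one, convMul_dualK_pow_monoA,
    one_apply_monoA, pow_zero, mul_one, mul_one, ← pow_mul, mul_comm]

lemma gram_nondegenerate (hp : Odd p) : (Matrix.of fun i j : Fin p × Fin p × Fin p =>
    pairing p (monoUf p i.1 i.2.1 i.2.2) (monoA p j.1 j.2.1 j.2.2)).Nondegenerate := by
  refine Matrix.nondegenerate_of_det_ne_zero fun hdet => ?_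
  obtain ⟨X, hX, hGX⟩ := Matrix.exists_mulVec_eq_zero_iff.mpr hdet
  refine hX (funext fun ⟨a₀, b, c⟩ => ?_)
  have nodes_injective : Function.Injective fun a : Fin p => q p ^ ((a : ℕ) + c * (p - 1) + b) := by
    intro a a' h
    simp only [add_assoc, pow_add _ (Fin.val _)] at h
    exact Fin.ext ((isPrimitiveRoot_q p).pow_inj a.2 a'.2
      (mul_right_cancel₀ (pow_ne_zero _ (q_ne_zero p)) h))
  have vandermonde : (fun a : Fin p => gramCoeff p a b c * X (a, b, c)) = 0 := by
    refine Matrix.eq_zero_of_forall_pow_sum_mul_pow_eq_zero nodes_injective fun r => ?_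
    have hr := congrFun hGX (r, b, c)
    rw [Matrix.mulVec, dotProduct, Fintype.sum_prod_type, Pi.zero_apply] at hr
    rw [← hr]
    refine Finset.sum_congr rfl fun a _ => ?_
    rw [Fintype.sum_eq_single (b, c), Matrix.of_apply,
      pairing_monoUf_monoA_self (q_sq_ne_one hp Fact.out), mul_right_comm]
    intro ef hef
    rw [Matrix.of_apply, pairing_monoUf_monoA_of_ne, zero_mul]
    grind
  exact (mul_eq_zero.mp (congrFun vandermonde a₀)).resolve_left (gramCoeff_ne_zero hp _ b.2 c.2)

theorem pairing_nondegenerate (hp : Odd p) : (pairing p).Nondegenerate :=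
  nondegenerate_of_gram (span_monoUf p) (span_monoA p) (gram_nondegenerate hp)

end Values

/-- Existence, uniqueness, explicit values, and nondegeneracy of the Hopf pairing
between `U_f = U(e(1,1|p))` and `A = A(E(1,1|p))`. -/
theorem statement9 (p : ℕ) (hp : Odd p) (hp3 : 3 ≤ p)
    (ΔA : A p →ₐ[ℂ] (A p ⊗[ℂ] A p))
    (hΔA₁ : ΔA (ηp p) = ηp p ⊗ₜ[ℂ] 1 + dl p ⊗ₜ[ℂ] ηp p)
    (hΔA₂ : ΔA (ηm p) = ηm p ⊗ₜ[ℂ] 1 + (dl p ^ (p - 1)) ⊗ₜ[ℂ] ηm p)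
    (hΔA₃ : ΔA (dl p) = dl p ⊗ₜ[ℂ] dl p)
    (εA : A p →ₐ[ℂ] ℂ)
    (hεA : εA (ηp p) = 0 ∧ εA (ηm p) = 0 ∧ εA (dl p) = 1)
    (ΔU : Uf p →ₐ[ℂ] (Uf p ⊗[ℂ] Uf p))
    (hΔU₁ : ΔU (up p) = up p ⊗ₜ[ℂ] uk p + ukinv p ⊗ₜ[ℂ] up p)
    (hΔU₂ : ΔU (um p) = um p ⊗ₜ[ℂ] uk p + ukinv p ⊗ₜ[ℂ] um p)
    (hΔU₃ : ΔU (uk p) = uk p ⊗ₜ[ℂ] uk p)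
    (hΔU₄ : ΔU (ukinv p) = ukinv p ⊗ₜ[ℂ] ukinv p)
    (εU : Uf p →ₐ[ℂ] ℂ)
    (hεU : εU (up p) = 0 ∧ εU (um p) = 0 ∧ εU (uk p) = 1 ∧ εU (ukinv p) = 1) :
    -- the Hopf-pairing axioms together with the generator values
    (∃! B : Uf p →ₗ[ℂ] Module.Dual ℂ (A p),
      ((∀ (u v : Uf p) (x : A p),
          B (u * v) x =
            TensorProduct.dualDistrib ℂ (A p) (A p) (B u ⊗ₜ[ℂ] B v) (ΔA x)) ∧
       (∀ (u : Uf p) (x y : A p),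
          B u (x * y) =
            TensorProduct.dualDistrib ℂ (Uf p) (Uf p)
              (B.flip x ⊗ₜ[ℂ] B.flip y) (ΔU u)) ∧
       (∀ x : A p, B 1 x = εA x) ∧
       (∀ u : Uf p, B u 1 = εU u) ∧
       B (uk p) (dl p) = q p ∧ B (ukinv p) (dl p) = (q p)⁻¹ ∧
       B (uk p) (ηp p) = 0 ∧ B (uk p) (ηm p) = 0 ∧
       B (ukinv p) (ηp p) = 0 ∧ B (ukinv p) (ηm p) = 0 ∧
       B (up p) (ηp p) = Complex.I * qh p ∧ B (um p) (ηm p) = Complex.I * (qh p)⁻¹ ∧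
       B (up p) (ηm p) = 0 ∧ B (um p) (ηp p) = 0 ∧
       B (up p) (dl p) = 0 ∧ B (um p) (dl p) = 0)) ∧
    -- every such pairing has the stated values and is nondegenerate
    (∀ B : Uf p →ₗ[ℂ] Module.Dual ℂ (A p),
      ((∀ (u v : Uf p) (x : A p),
          B (u * v) x =
            TensorProduct.dualDistrib ℂ (A p) (A p) (B u ⊗ₜ[ℂ] B v) (ΔA x)) ∧
       (∀ (u : Uf p) (x y : A p),
          B u (x * y) =
            TensorProduct.dualDistrib ℂ (Uf p) (Uf p)
              (B.flip x ⊗ₜ[ℂ] B.flip y) (ΔU u)) ∧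
       (∀ x : A p, B 1 x = εA x) ∧
       (∀ u : Uf p, B u 1 = εU u) ∧
       B (uk p) (dl p) = q p ∧ B (ukinv p) (dl p) = (q p)⁻¹ ∧
       B (uk p) (ηp p) = 0 ∧ B (uk p) (ηm p) = 0 ∧
       B (ukinv p) (ηp p) = 0 ∧ B (ukinv p) (ηm p) = 0 ∧
       B (up p) (ηp p) = Complex.I * qh p ∧ B (um p) (ηm p) = Complex.I * (qh p)⁻¹ ∧
       B (up p) (ηm p) = 0 ∧ B (um p) (ηp p) = 0 ∧
       B (up p) (dl p) = 0 ∧ B (um p) (dl p) = 0) →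
      -- ⟨p₊^n, η₊^m⟩ = i^n q^{n/2} [n]! δ_{nm}
      (∀ n m : ℕ, n < p → m < p →
        B (up p ^ n) (ηp p ^ m) =
          if n = m then Complex.I ^ n * qh p ^ n * qfact p n else 0) ∧
      -- ⟨p₋^n, η₋^m⟩ = i^n q^{−n/2} [n]! δ_{nm}
      (∀ n m : ℕ, n < p → m < p →
        B (um p ^ n) (ηm p ^ m) =
          if n = m then Complex.I ^ n * (qh p)⁻¹ ^ n * qfact p n else 0) ∧
      -- ⟨κ^n, δ^m⟩ = q^{nm}
      (∀ n m : ℕ, n < p → m < p → B (uk p ^ n) (dl p ^ m) = q p ^ (n * m)) ∧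
      -- nondegeneracy
      (∀ u : Uf p, (∀ x : A p, B u x = 0) → u = 0) ∧
      (∀ x : A p, (∀ u : Uf p, B u x = 0) → x = 0)) := by
  have : Fact (1 < p) := ⟨by omega⟩
  let _ : ACoproduct p := ⟨ΔA, εA, hΔA₁, hΔA₂, hΔA₃, hεA.1, hεA.2.1, hεA.2.2⟩
  let _ : UfCoproduct p := ⟨ΔU, εU, hΔU₁, hΔU₂, hΔU₃, hΔU₄, hεU.1, hεU.2.1, hεU.2.2.1, hεU.2.2.2⟩
  have hpairing : IsHopfPairing (pairing p) := isHopfPairing_pairing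
  have unique (B : Uf p →ₗ[ℂ] Module.Dual ℂ (A p)) (hB : IsHopfPairing B)
      (hv : HasGeneratorValues B) : B = pairing p := hB.eq_pairing hv
  have hq : q p ^ 2 ≠ 1 := q_sq_ne_one hp Fact.out
  refine ⟨⟨pairing p, ⟨hpairing.mul_apply, hpairing.apply_mul, hpairing.one_apply,
    hpairing.apply_one, hasGeneratorValues_pairing⟩,
    fun B ⟨h₁, h₂, h₃, h₄, hv⟩ => unique B ⟨h₁, h₂, h₃, h₄⟩ hv⟩, ?_⟩
  rintro B ⟨h₁, h₂, h₃, h₄, hv⟩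
  obtain rfl := unique B ⟨h₁, h₂, h₃, h₄⟩ hv
  exact ⟨fun n m _ _ => pairing_up_pow_ηp_pow hq n m, fun n m _ _ => pairing_um_pow_ηm_pow hq n m,
    fun n m _ _ => pairing_uk_pow_dl_pow n m, (pairing_nondegenerate hp).1,
    (pairing_nondegenerate hp).2⟩
end
end
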